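/- Let K be a number field and S a finite set of places of K containing all the archimedean ones. Let A, B, C ∈ ℙ¹(K) be three distinct points. Then the set of points P ∈ ℙ¹(K) satisfying δ_𝔭(A,P) = 0, δ_𝔭(B,P) = 0 and δ_𝔭(C,P) = 0 for all primes 𝔭 ∉ S is finite, of cardinality at most 3·7^{4|S|}. -/

import Mathlib

open NumberField IsDedekindDomain MvPolynomial
open scoped Classical nonZeroDivisors

set_option synthInstance.maxHeartbeats 1000000
set_option maxHeartbeats 1000000

noncomputable section

/-- The projective line over `K`. -/
abbrev P1 (K : Type*) [Field K] := Projectivization K (Fin 2 → K)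

variable {K : Type*} [Field K] [NumberField K]

/-- The additive `v`-adic valuation (order) of `x ∈ K`, with junk value `0` at `x = 0`,
normalized so that it is surjective onto `ℤ`. -/
def ordAt (v : HeightOneSpectrum (𝓞 K)) (x : K) : ℤ :=
  if hx : x = 0 then 0
  else - Multiplicative.toAdd (WithZero.unzero ((v.valuation K).ne_zero_iff.mpr hx))

/-- `min (v(x), v(y))` for a pair of coordinates, not both zero. -/
def minOrd (v : HeightOneSpectrum (𝓞 K)) (x y : K) : ℤ :=
  if x = 0 then ordAt v y else if y = 0 then ordAt v x else min (ordAt v x) (ordAt v y)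

/-- The `v`-adic logarithmic distance between two points of `ℙ¹(K)`:
`δ_v(P,Q) = v(x₁y₂ - x₂y₁) - min(v x₁, v y₁) - min(v x₂, v y₂)`, with value `⊤` when `P = Q`
(it is independent of the choice of homogeneous coordinates, so we compute it on the chosen
representatives). -/
def logDist (v : HeightOneSpectrum (𝓞 K)) (P Q : P1 K) : WithTop ℤ :=
  if P = Q then ⊤
  else ((ordAt v (P.rep 0 * Q.rep 1 - P.rep 1 * Q.rep 0)
        - minOrd v (P.rep 0) (P.rep 1) - minOrd v (Q.rep 0) (Q.rep 1) : ℤ) : WithTop ℤ)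

/-- An endomorphism of `ℙ¹` of degree `d` defined over `K`, given by a pair of homogeneous
forms of degree `d` with no common zero over the algebraic closure, together with the induced
self-map of `ℙ¹(K)`. -/
structure P1Map (K : Type*) [Field K] (d : ℕ) where
  toFun : P1 K → P1 K
  F : MvPolynomial (Fin 2) K
  G : MvPolynomial (Fin 2) K
  homF : F.IsHomogeneous d
  homG : G.IsHomogeneous d
  coprime : ∀ x y : AlgebraicClosure K,
    aeval ![x, y] F = 0 → aeval ![x, y] G = 0 → x = 0 ∧ y = 0
  compat : ∀ (x y : K) (hxy : ![x, y] ≠ 0)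
    (h : ![eval ![x, y] F, eval ![x, y] G] ≠ 0),
    toFun (Projectivization.mk K ![x, y] hxy) =
      Projectivization.mk K ![eval ![x, y] F, eval ![x, y] G] h

variable {d : ℕ}

/-- `φ` has good reduction at the finite place `v`: some representing pair of forms has
coefficients in the valuation ring at `v`, not all in the maximal ideal, and the reductions
of the two forms modulo `v` have no common zero in `ℙ¹` of the algebraic closure of the
residue field. -/
def GoodReductionAt (φ : P1Map K d) (v : HeightOneSpectrum (𝓞 K)) : Prop :=
  ∃ c : K, c ≠ 0 ∧
    ∃ F₀ G₀ : MvPolynomial (Fin 2) (v.valuation (K := K)).valuationSubring,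
      MvPolynomial.map ((v.valuation (K := K)).valuationSubring.subtype) F₀ = C c * φ.F ∧
      MvPolynomial.map ((v.valuation (K := K)).valuationSubring.subtype) G₀ = C c * φ.G ∧
      ((∃ m, F₀.coeff m ∉ IsLocalRing.maximalIdeal (v.valuation (K := K)).valuationSubring) ∨
        (∃ m, G₀.coeff m ∉ IsLocalRing.maximalIdeal (v.valuation (K := K)).valuationSubring)) ∧
      ∀ x y : AlgebraicClosure
          (IsLocalRing.ResidueField (v.valuation (K := K)).valuationSubring),
        eval ![x, y] (MvPolynomial.map
          ((algebraMap (IsLocalRing.ResidueField (v.valuation (K := K)).valuationSubring)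
              (AlgebraicClosure _)).comp
            (IsLocalRing.residue _)) F₀) = 0 →
        eval ![x, y] (MvPolynomial.map
          ((algebraMap (IsLocalRing.ResidueField (v.valuation (K := K)).valuationSubring)
              (AlgebraicClosure _)).comp
            (IsLocalRing.residue _)) G₀) = 0 →
        x = 0 ∧ y = 0

/-- `φ` has good reduction outside `S`, where `S` consists of all archimedean places together
with the finite places in `T`. -/
def GoodReductionOutside (φ : P1Map K d) (T : Finset (HeightOneSpectrum (𝓞 K))) : Prop :=
  ∀ v ∉ T, GoodReductionAt φ v

/-- `P` is a periodic point of `φ`. -/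
def IsPeriodicPoint (φ : P1Map K d) (P : P1 K) : Prop :=
  ∃ n, 0 < n ∧ φ.toFun^[n] P = P

/-- `P` is a preperiodic point of `φ`. -/
def IsPreperiodicPoint (φ : P1Map K d) (P : P1 K) : Prop :=
  ∃ m, IsPeriodicPoint φ (φ.toFun^[m] P)

/-- `P` is a tail point of `φ`: preperiodic but not periodic. -/
def IsTailPoint (φ : P1Map K d) (P : P1 K) : Prop :=
  IsPreperiodicPoint φ P ∧ ¬ IsPeriodicPoint φ P

/-- The set `Tail(φ,K,P)` of `K`-rational tail points of `P`: non-periodic points having `P`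
in their forward orbit. -/
def TailOf (φ : P1Map K d) (P : P1 K) : Set (P1 K) :=
  {Q | ¬ IsPeriodicPoint φ Q ∧ ∃ n, φ.toFun^[n] Q = P}

/-- `P = [a:b]` is a critical point of `φ = [F:G]`: the algebraic condition
`φ([x:y]) = φ([a:b])`, i.e. the form `G(a,b)·F(X,Y) - F(a,b)·G(X,Y)`, vanishes to order
at least `2` at `[a:b]`. -/
def IsCriticalPt (φ : P1Map K d) (P : P1 K) : Prop :=
  ∃ (a b : K) (hab : ![a, b] ≠ 0), P = Projectivization.mk K ![a, b] hab ∧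
    (C b * X 0 - C a * X 1) ^ 2 ∣
      (C (eval ![a, b] φ.G) * φ.F - C (eval ![a, b] φ.F) * φ.G)

/-- `P` belongs to a critical cycle of `φ`: it lies in the orbit of a critical periodic
point. -/
def InCriticalCycle (φ : P1Map K d) (P : P1 K) : Prop :=
  ∃ Q, IsCriticalPt φ Q ∧ IsPeriodicPoint φ Q ∧ ∃ n, φ.toFun^[n] Q = P

/-- The cardinality `|S|` of the set of places `S` consisting of all archimedean places
together with the finite places in `T`. -/
def sCard (K : Type*) [Field K] [NumberField K] (T : Finset (HeightOneSpectrum (𝓞 K))) : ℕ :=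
  T.card + Fintype.card (InfinitePlace K)

/-- `B(s) = 2^{16 s}`. -/
def Bconst (s : ℕ) : ℕ := 2 ^ (16 * s)

/-- `C(n,s) = e^{(6n)^{3n} (n s + 1 - n)}`. -/
def Cconst (n s : ℕ) : ℝ := Real.exp ((6 * n : ℝ) ^ (3 * n) * (n * s + 1 - n))

/-- `CV(d,s) = (3B(s)+13)d + 27B(s) + C(5,s) + 6C(3,s) + 32`. -/
def CVconst (d s : ℕ) : ℝ :=
  (3 * (Bconst s : ℝ) + 13) * d + 27 * (Bconst s : ℝ) + Cconst 5 s + 6 * Cconst 3 s + 32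

/-- `L₁(d,s) = (d-1)(1 + d(1 + B(s)))`. -/
def L1const (d s : ℕ) : ℕ := (d - 1) * (1 + d * (1 + Bconst s))

/-- `L₂(d,s) = max{(2(C(3,s)+2)+1)d + 1, (d-1)(1 + B(s)(B(s) + C(3,s) + 3))}`. -/
def L2const (d s : ℕ) : ℝ :=
  max ((2 * (Cconst 3 s + 2) + 1) * d + 1)
    (((d : ℝ) - 1) * (1 + (Bconst s : ℝ) * ((Bconst s : ℝ) + Cconst 3 s + 3)))

/-- `L₃(d,s) = ((1 + 3B(s))B(s) + 1)(d-1)`. -/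
def L3const (d s : ℕ) : ℕ := ((1 + 3 * Bconst s) * Bconst s + 1) * (d - 1)

/-- `L₄(d,s) = (C(3,s) + 3)(d-1)`. -/
def L4const (d s : ℕ) : ℝ := (Cconst 3 s + 3) * ((d : ℝ) - 1)

end


/-- beta integral -/
theorem beta_nat (a b : ℕ) : ∫ t in (0:ℝ)..1, t ^ a * (1 - t) ^ b
    = (a.factorial * b.factorial : ℝ) / ((a + b + 1).factorial : ℝ) := by
  induction b generalizing a with
  | zero =>
    simp only [pow_zero, mul_one, integral_pow, Nat.factorial_zero, Nat.cast_one, add_zero]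
    rw [Nat.factorial_succ]; push_cast
    have : (a.factorial : ℝ) ≠ 0 := by exact_mod_cast a.factorial_ne_zero
    field_simp
    simp
  | succ b ih =>
    have h1 : ∫ t in (0:ℝ)..1, ((a + 1 : ℝ) * (t ^ a * (1 - t) ^ (b + 1))
        - (b + 1 : ℝ) * (t ^ (a + 1) * (1 - t) ^ b)) = 0 := by
      have := intervalIntegral.integral_eq_sub_of_hasDerivAt (a := (0:ℝ)) (b := 1)
        (f := fun t : ℝ => t ^ (a + 1) * (1 - t) ^ (b + 1))
        (f' := fun t => ((a + 1 : ℝ) * (t ^ a * (1 - t) ^ (b + 1))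
        - (b + 1 : ℝ) * (t ^ (a + 1) * (1 - t) ^ b)))
        (by
          intro t _
          have h2 := (hasDerivAt_pow (a + 1) t)
          have h3 := ((hasDerivAt_id t).const_sub 1).pow (b + 1)
          have h4 := h2.mul h3
          refine HasDerivAt.congr_deriv h4 ?_
          simp only [Nat.cast_add, Nat.cast_one, Nat.add_sub_cancel, Pi.pow_apply, id]
          ring)
        (Continuous.intervalIntegrable (by fun_prop) _ _)
      rw [this]; simp
    rw [intervalIntegral.integral_sub (Continuous.intervalIntegrable (by fun_prop) _ _)
      (Continuous.intervalIntegrable (by fun_prop) _ _), intervalIntegral.integral_const_mul,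
      intervalIntegral.integral_const_mul, ih] at h1
    have e : a + 1 + b + 1 = a + (b + 1) + 1 := by ring
    rw [e, Nat.factorial_succ a] at h1
    rw [Nat.factorial_succ b]
    push_cast at h1 ⊢
    have hp : (a + 1 : ℝ) ≠ 0 := by positivity
    apply mul_left_cancel₀ hp
    rw [sub_eq_zero] at h1
    rw [h1]; ring

/-- the integer Padé forms -/
def padP {R : Type*} [CommRing R] (p q r : ℕ) (x y : R) : R :=
  ∑ k ∈ Finset.range (r + 1),
    (((p + k).choose k * (q + (r - k)).choose (r - k) : ℕ) : R) * (x ^ (r - k) * y ^ k)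

noncomputable def padM (p q r : ℕ) : ℝ := ((p + q + r + 1).factorial : ℝ) /
  (p.factorial * q.factorial * r.factorial)

theorem padP_integral (p q r : ℕ) (x y : ℝ) :
    padM p q r * ∫ t in (0:ℝ)..1, t ^ p * (1 - t) ^ q * (x * (1 - t) + y * t) ^ r
      = padP p q r x y := by
  have h1 : ∀ t : ℝ, t ^ p * (1 - t) ^ q * (x * (1 - t) + y * t) ^ r =
      ∑ k ∈ Finset.range (r + 1), (y ^ k * x ^ (r - k) * (r.choose k : ℝ)) *
        (t ^ (p + k) * (1 - t) ^ (q + (r - k))) := by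
    intro t
    rw [add_comm (x * (1 - t)), add_pow, Finset.mul_sum]
    refine Finset.sum_congr rfl fun k _ => ?_
    rw [mul_pow, mul_pow, pow_add, pow_add]; ring
  simp_rw [h1]
  rw [intervalIntegral.integral_finsetSum
    (fun i _ => Continuous.intervalIntegrable (by fun_prop) _ _), Finset.mul_sum, padP]
  refine Finset.sum_congr rfl fun k hk => ?_
  have hk' : k ≤ r := by simpa [Nat.lt_succ_iff] using hk
  rw [intervalIntegral.integral_const_mul, beta_nat, padM]
  have e : p + k + (q + (r - k)) + 1 = p + q + r + 1 := by omega
  rw [e]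
  push_cast
  have e1 : (((p + k).choose k : ℕ) : ℝ) = (p + k).factorial / (p.factorial * k.factorial) := by
    rw [Nat.choose_symm_add.symm, Nat.cast_add_choose]
  have e2 : (((q + (r - k)).choose (r - k) : ℕ) : ℝ)
      = (q + (r - k)).factorial / (q.factorial * (r - k).factorial) := by
    rw [Nat.choose_symm_add.symm, Nat.cast_add_choose]
  have e3 : ((r.choose k : ℕ) : ℝ) = r.factorial / (k.factorial * (r - k).factorial) := by
    rw [Nat.cast_choose ℝ hk']
  rw [e1, e2, e3]
  have f1 := Nat.cast_ne_zero (R := ℝ).2 (Nat.factorial_ne_zero p)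
  have f2 := Nat.cast_ne_zero (R := ℝ).2 (Nat.factorial_ne_zero q)
  have f3 := Nat.cast_ne_zero (R := ℝ).2 (Nat.factorial_ne_zero r)
  have f4 := Nat.cast_ne_zero (R := ℝ).2 (Nat.factorial_ne_zero k)
  have f5 := Nat.cast_ne_zero (R := ℝ).2 (Nat.factorial_ne_zero (r - k))
  have f6 := Nat.cast_ne_zero (R := ℝ).2 (Nat.factorial_ne_zero (p + q + r + 1))
  field_simp

theorem padP_map {R S : Type*} [CommRing R] [CommRing S] (f : R →+* S) (p q r : ℕ) (x y : R) :
    f (padP p q r x y) = padP p q r (f x) (f y) := by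
  simp [padP, map_sum]

theorem pade_real (a b c : ℕ) (u : ℝ) :
    padP a b c (-u) (1 - u) = (-1) ^ c * u ^ (a + c + 1) * padP a c b 1 (1 - u)
      + (1 - u) ^ (b + c + 1) * padP c b a u 1 := by
  have hM1 : padM a c b = padM a b c := by
    unfold padM; rw [show a + c + b + 1 = a + b + c + 1 by ring]; congr 1; ring
  have hM2 : padM c b a = padM a b c := by
    unfold padM; rw [show c + b + a + 1 = a + b + c + 1 by ring]; congr 1; ring
  rw [← padP_integral, ← padP_integral, ← padP_integral, hM1, hM2]
  set f : ℝ → ℝ := fun w => w ^ a * (1 - w) ^ b * (w - u) ^ c with hf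
  have hfc : Continuous f := by fun_prop
  have A0 : ∫ t in (0:ℝ)..1, t ^ a * (1 - t) ^ b * (-u * (1 - t) + (1 - u) * t) ^ c
      = ∫ t in (0:ℝ)..1, f t := by
    congr 1; funext t; simp only [hf]; congr 2; ring
  have A1 : (-1) ^ c * u ^ (a + c + 1) *
      (∫ t in (0:ℝ)..1, t ^ a * (1 - t) ^ c * (1 * (1 - t) + (1 - u) * t) ^ b)
      = ∫ t in (0:ℝ)..u, f t := by
    have := intervalIntegral.mul_integral_comp_mul_left (f := f) (a := 0) (b := 1) (c := u)
    simp only [mul_zero, mul_one] at this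
    rw [← this, ← intervalIntegral.integral_const_mul, ← intervalIntegral.integral_const_mul]
    congr 1; funext t; simp only [hf]
    rw [show u * t - u = (-1) * u * (1 - t) by ring, mul_pow, mul_pow, mul_pow]
    rw [show 1 * (1 - t) + (1 - u) * t = 1 - u * t by ring]
    ring
  have A2 : (1 - u) ^ (b + c + 1) *
      (∫ t in (0:ℝ)..1, t ^ c * (1 - t) ^ b * (u * (1 - t) + 1 * t) ^ a)
      = ∫ t in u..1, f t := by
    have := intervalIntegral.mul_integral_comp_mul_add (f := f) (a := 0) (b := 1)
      (c := 1 - u) (d := u)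
    simp only [mul_zero, mul_one, zero_add, sub_add_cancel] at this
    rw [← this, ← intervalIntegral.integral_const_mul, ← intervalIntegral.integral_const_mul]
    congr 1; funext t; simp only [hf]
    rw [show 1 - ((1 - u) * t + u) = (1 - u) * (1 - t) by ring,
      show (1 - u) * t + u - u = (1 - u) * t by ring, mul_pow, mul_pow]
    rw [show u * (1 - t) + 1 * t = (1 - u) * t + u by ring]
    ring
  have hadd := intervalIntegral.integral_add_adjacent_intervals (μ := MeasureTheory.volume)
    (hfc.intervalIntegrable 0 u) (hfc.intervalIntegrable u 1)
  rw [A0, ← hadd, ← A1, ← A2]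
  ring

theorem pade_poly (a b c : ℕ) :
    padP a b c (-Polynomial.X) (1 - Polynomial.X : Polynomial ℤ)
     = (-1) ^ c * Polynomial.X ^ (a + c + 1) * padP a c b 1 (1 - Polynomial.X)
      + (1 - Polynomial.X) ^ (b + c + 1) * padP c b a Polynomial.X 1 := by
  apply Polynomial.map_injective (Int.castRingHom ℝ) Int.cast_injective
  apply Polynomial.funext
  intro u
  have key := pade_real a b c u
  rw [Polynomial.eval_map, ← Polynomial.coe_eval₂RingHom]
  rw [Polynomial.eval_map, ← Polynomial.coe_eval₂RingHom]
  simp only [map_add, map_mul, map_pow, map_neg, map_sub, map_one, padP_map]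
  simpa using key

theorem pade_ring {R : Type*} [CommRing R] (a b c : ℕ) (u : R) :
    (-1) ^ c * u ^ (a + c + 1) * padP a c b 1 (1 - u)
      + (1 - u) ^ (b + c + 1) * padP c b a u 1 = padP a b c (-u) (1 - u) := by
  have key := congrArg (Polynomial.eval₂RingHom (Int.castRingHom R) u) (pade_poly a b c)
  simp only [map_add, map_mul, map_pow, map_neg, map_sub, map_one, padP_map] at key
  simpa using key.symm

theorem padP_natDegree (p q r : ℕ) (x y : Polynomial ℤ) (hx : x.natDegree ≤ 1)
    (hy : y.natDegree ≤ 1) : (padP p q r x y).natDegree ≤ r := by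
  unfold padP
  apply Polynomial.natDegree_sum_le_of_forall_le
  intro k hk
  have hk' : k ≤ r := by simpa [Nat.lt_succ_iff] using hk
  refine (Polynomial.natDegree_mul_le).trans ?_
  rw [Polynomial.natDegree_natCast, zero_add]
  refine (Polynomial.natDegree_mul_le).trans ?_
  have h1 := Polynomial.natDegree_pow_le (p := x) (n := r - k)
  have h2 := Polynomial.natDegree_pow_le (p := y) (n := k)
  have h3 : (r - k) * x.natDegree ≤ (r - k) * 1 := Nat.mul_le_mul_left _ hx
  have h4 : k * y.natDegree ≤ k * 1 := Nat.mul_le_mul_left _ hy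
  omega

/-- The Wronskian-type factor. -/
def padE {R : Type*} [CommRing R] (N : ℕ) (u : R) : R :=
  padP N N N 1 (1 - u) * padP N N (N + 1) u 1 - u * padP N N N u 1 * padP (N + 1) N N 1 (1 - u)

theorem padE_map {R S : Type*} [CommRing R] [CommRing S] (f : R →+* S) (N : ℕ) (x : R) :
    f (padE N x) = padE N (f x) := by
  simp [padE, padP_map]

theorem padE_poly (N : ℕ) : ∃ e : ℤ, e ≠ 0 ∧ padE N (Polynomial.X : Polynomial ℤ)
    = Polynomial.C e := by
  have hD : (-1) ^ N * ((Polynomial.X : Polynomial ℤ) ^ (2 * N + 1)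
      * (1 - Polynomial.X) ^ (2 * N + 1)) * padE N Polynomial.X =
      padP N N N (-Polynomial.X) (1 - Polynomial.X) *
        ((1 - Polynomial.X) ^ (N + N + 1) * padP N N (N + 1) Polynomial.X 1)
      - ((1 - Polynomial.X) ^ (N + N + 1) * padP N N N Polynomial.X 1) *
        padP (N + 1) N N (-Polynomial.X) (1 - Polynomial.X) := by
    rw [← pade_ring, ← pade_ring, padE]
    ring
  have h1X : (1 - Polynomial.X : Polynomial ℤ).natDegree ≤ 1 := by
    refine (Polynomial.natDegree_sub_le _ _).trans ?_
    simp
  have h1X' : (1 - Polynomial.X : Polynomial ℤ).natDegree = 1 := by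
    rw [← Polynomial.natDegree_neg, neg_sub, ← Polynomial.C_1, Polynomial.natDegree_X_sub_C]
  have hne : (1 - Polynomial.X : Polynomial ℤ) ≠ 0 := by
    intro h; rw [h] at h1X'; simp at h1X'
  have hnX : (-Polynomial.X : Polynomial ℤ).natDegree ≤ 1 := by simp
  have hX : (Polynomial.X : Polynomial ℤ).natDegree ≤ 1 := by simp
  have h1 : (1 : Polynomial ℤ).natDegree ≤ 1 := by simp
  have hpow : ((1 - Polynomial.X : Polynomial ℤ) ^ (N + N + 1)).natDegree ≤ 2 * N + 1 := by
    rw [Polynomial.natDegree_pow, h1X']; omega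
  have hdeg : (padP N N N (-Polynomial.X) (1 - Polynomial.X) *
        ((1 - Polynomial.X) ^ (N + N + 1) * padP N N (N + 1) Polynomial.X 1)
      - ((1 - Polynomial.X) ^ (N + N + 1) * padP N N N Polynomial.X 1) *
        padP (N + 1) N N (-Polynomial.X) (1 - Polynomial.X : Polynomial ℤ)).natDegree
        ≤ 4 * N + 2 := by
    refine (Polynomial.natDegree_sub_le _ _).trans (max_le ?_ ?_)
    · refine (Polynomial.natDegree_mul_le).trans ?_
      have := padP_natDegree N N N _ _ hnX h1X
      have h2 := Polynomial.natDegree_mul_le (p := (1 - Polynomial.X : Polynomial ℤ) ^ (N + N + 1))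
        (q := padP N N (N + 1) Polynomial.X 1)
      have := padP_natDegree N N (N + 1) _ _ hX h1
      omega
    · refine (Polynomial.natDegree_mul_le).trans ?_
      have := padP_natDegree (N + 1) N N _ _ hnX h1X
      have h2 := Polynomial.natDegree_mul_le (p := (1 - Polynomial.X : Polynomial ℤ) ^ (N + N + 1))
        (q := padP N N N Polynomial.X 1)
      have := padP_natDegree N N N _ _ hX h1
      omega
  rw [← hD] at hdeg
  have heval : (padE N (Polynomial.X : Polynomial ℤ)).eval 0 ≠ 0 := by
    rw [← Polynomial.coe_evalRingHom, padE_map]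
    simp only [Polynomial.coe_evalRingHom, Polynomial.eval_X, padE, sub_zero, zero_mul]
    have p1 : 0 < padP N N N (1 : ℤ) 1 := by
      unfold padP
      apply Finset.sum_pos
      · intro k hk
        have : 0 < (N + k).choose k * (N + (N - k)).choose (N - k) :=
          Nat.mul_pos (Nat.choose_pos (by omega)) (Nat.choose_pos (by omega))
        simp only [one_pow, mul_one]
        exact_mod_cast this
      · simp
    have p2 : 0 < padP N N (N + 1) (0 : ℤ) 1 := by
      unfold padP
      rw [Finset.sum_range_succ, Finset.sum_eq_zero]
      · have : 0 < (N + (N + 1)).choose (N + 1) := Nat.choose_pos (by omega)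
        simp
        exact_mod_cast this
      · intro k hk
        have : N + 1 - k ≠ 0 := by have := Finset.mem_range.1 hk; omega
        simp [this]
    exact (mul_pos p1 p2).ne'
  have hE0 : padE N (Polynomial.X : Polynomial ℤ) ≠ 0 := by
    intro h; rw [h] at heval; simp at heval
  have hd0 : (padE N (Polynomial.X : Polynomial ℤ)).natDegree = 0 := by
    have hne1 : (Polynomial.X : Polynomial ℤ) ^ (2 * N + 1) ≠ 0 :=
      pow_ne_zero _ Polynomial.X_ne_zero
    have hne2 : (1 - Polynomial.X : Polynomial ℤ) ^ (2 * N + 1) ≠ 0 := pow_ne_zero _ hne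
    have hne3 : ((-1 : Polynomial ℤ)) ^ N ≠ 0 := pow_ne_zero _ (by simp)
    rw [Polynomial.natDegree_mul (mul_ne_zero hne3 (mul_ne_zero hne1 hne2)) hE0,
      Polynomial.natDegree_mul hne3 (mul_ne_zero hne1 hne2),
      Polynomial.natDegree_mul hne1 hne2, Polynomial.natDegree_pow, Polynomial.natDegree_pow,
      Polynomial.natDegree_pow, h1X', Polynomial.natDegree_X] at hdeg
    omega
  rw [Polynomial.eq_C_of_natDegree_eq_zero hd0] at heval ⊢
  exact ⟨_, by simpa using heval, rfl⟩

theorem padE_ne_zero {K : Type*} [Field K] [CharZero K] (N : ℕ) (u : K) : padE N u ≠ 0 := by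
  obtain ⟨e, he, h⟩ := padE_poly N
  have key := congrArg (Polynomial.eval₂RingHom (Int.castRingHom K) u) h
  rw [padE_map] at key
  simp at key
  rw [key]
  exact_mod_cast he

/-- max of the three coordinates -/
def mx {K : Type*} [Field K] (f : AbsoluteValue K ℝ) (u : K) : ℝ := max (max (f u) (f (1 - u))) 1

theorem one_le_mx {K : Type*} [Field K] (f : AbsoluteValue K ℝ) (u : K) : 1 ≤ mx f u :=
  le_max_right _ _

theorem padP_abs {K : Type*} [Field K] (f : AbsoluteValue K ℝ) (p q r : ℕ) (x y : K) (m : ℝ)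
    (hx : f x ≤ m) (hy : f y ≤ m) :
    f (padP p q r x y) ≤ (r + 1) * 2 ^ (p + q + r) * m ^ r := by
  have hm : 0 ≤ m := (f.nonneg x).trans hx
  unfold padP
  refine (f.sum_le _ _).trans ?_
  have : ∀ k ∈ Finset.range (r + 1),
      f ((((p + k).choose k * (q + (r - k)).choose (r - k) : ℕ) : K) * (x ^ (r - k) * y ^ k))
      ≤ 2 ^ (p + q + r) * m ^ r := by
    intro k hk
    have hk' : k ≤ r := by simpa [Nat.lt_succ_iff] using hk
    rw [map_mul, map_mul, map_pow, map_pow]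
    have h1 : f (((p + k).choose k * (q + (r - k)).choose (r - k) : ℕ) : K) ≤ 2 ^ (p + q + r) := by
      refine (f.apply_nat_le_self _).trans ?_
      have a1 := Nat.choose_le_two_pow (p + k) k
      have a2 := Nat.choose_le_two_pow (q + (r - k)) (r - k)
      have a3 := Nat.mul_le_mul a1 a2
      rw [← pow_add, show p + k + (q + (r - k)) = p + q + r by omega] at a3
      exact_mod_cast a3
    have h2 : f x ^ (r - k) * f y ^ k ≤ m ^ r := by
      calc f x ^ (r - k) * f y ^ k ≤ m ^ (r - k) * m ^ k := by
            gcongr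
        _ = m ^ r := by rw [← pow_add]; congr 1; omega
    have h3 : 0 ≤ f x ^ (r - k) * f y ^ k :=
      mul_nonneg (pow_nonneg (f.nonneg _) _) (pow_nonneg (f.nonneg _) _)
    gcongr
  refine (Finset.sum_le_sum this).trans ?_
  rw [Finset.sum_const, Finset.card_range, nsmul_eq_mul]
  push_cast
  rw [mul_assoc]

theorem padP_abs_na {K : Type*} [Field K] (f : AbsoluteValue K ℝ) (hf : IsNonarchimedean f)
    (p q r : ℕ) (x y : K) (m : ℝ)
    (hx : f x ≤ m) (hy : f y ≤ m) :
    f (padP p q r x y) ≤ m ^ r := by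
  have hm : 0 ≤ m := (f.nonneg x).trans hx
  unfold padP
  obtain ⟨k, hk, h⟩ := hf.finset_image_add_of_nonempty (t := Finset.range (r + 1))
    (fun k => (((p + k).choose k * (q + (r - k)).choose (r - k) : ℕ) : K) * (x ^ (r - k) * y ^ k))
    (by simp)
  refine h.trans ?_
  have hk' : k ≤ r := by simpa [Nat.lt_succ_iff] using hk
  rw [map_mul, map_mul, map_pow, map_pow]
  have h1 : f (((p + k).choose k * (q + (r - k)).choose (r - k) : ℕ) : K) ≤ 1 :=
    IsNonarchimedean.apply_natCast_le_one hf
  have h2 : f x ^ (r - k) * f y ^ k ≤ m ^ r := by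
      calc f x ^ (r - k) * f y ^ k ≤ m ^ (r - k) * m ^ k := by
            gcongr
        _ = m ^ r := by rw [← pow_add]; congr 1; omega
  have h3 : 0 ≤ f x ^ (r - k) * f y ^ k :=
      mul_nonneg (pow_nonneg (f.nonneg _) _) (pow_nonneg (f.nonneg _) _)
  calc _ ≤ 1 * m ^ r := by gcongr
    _ = _ := one_mul _

/-- coordinates -/
def cx {K : Type*} [Field K] (u : K) : Fin 3 → K := ![u, 1 - u, 1]

theorem cx_le_mx {K : Type*} [Field K] (f : AbsoluteValue K ℝ) (u : K) (i : Fin 3) :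
    f (cx u i) ≤ mx f u := by
  fin_cases i <;> simp [cx, mx]

theorem pade_bound_aux (A B c : ℝ) (D : ℝ) (hA : 0 ≤ A) (hB : B ≤ c * D) :
    A * B ≤ c * A * D := by
  nlinarith [mul_le_mul_of_nonneg_left hB hA]

/-- generic form of the bounds for a fixed absolute value -/
theorem pade_bounds {K : Type*} [Field K] (N : ℕ) (u : K) (f : AbsoluteValue K ℝ) (c : ℝ)
    (hc : ∀ p q r : ℕ, p + q + r ≤ 3 * N + 1 → r ≤ N + 1 → ∀ x y : K, f x ≤ mx f u → f y ≤ mx f u →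
      f (padP p q r x y) ≤ c * mx f u ^ r) (hc0 : 0 ≤ c) :
    (f ((-1) ^ N * u ^ (N + N + 1) * padP N N N 1 (1 - u)) ≤
        c * f u ^ (2 * N + 1) * mx f u ^ (N + 1) ∧
     f ((1 - u) ^ (N + N + 1) * padP N N N u 1) ≤
        c * f (1 - u) ^ (2 * N + 1) * mx f u ^ (N + 1) ∧
     f (padP N N N (-u) (1 - u)) ≤ c * f 1 ^ (2 * N + 1) * mx f u ^ (N + 1)) ∧
    (f ((-1) ^ N * u ^ (N + 1 + N + 1) * padP (N + 1) N N 1 (1 - u)) ≤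
        c * f u ^ (2 * N + 1) * mx f u ^ (N + 1) ∧
     f ((1 - u) ^ (N + N + 1) * padP N N (N + 1) u 1) ≤
        c * f (1 - u) ^ (2 * N + 1) * mx f u ^ (N + 1) ∧
     f (padP (N + 1) N N (-u) (1 - u)) ≤ c * f 1 ^ (2 * N + 1) * mx f u ^ (N + 1)) := by
  have h0 : f u ≤ mx f u := cx_le_mx f u 0
  have h0' : f (-u) ≤ mx f u := by rwa [f.map_neg]
  have h1 : f (1 - u) ≤ mx f u := cx_le_mx f u 1
  have h2 : f 1 ≤ mx f u := cx_le_mx f u 2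
  have hm := one_le_mx f u
  have hpow : mx f u ^ N ≤ mx f u ^ (N + 1) := pow_le_pow_right₀ hm (by omega)
  have hstep : c * mx f u ^ N ≤ c * mx f u ^ (N + 1) := by gcongr
  have hfu := f.nonneg u
  have hf1u := f.nonneg (1 - u)
  have hneg : f ((-1) ^ N) = 1 := by rw [map_pow, f.map_neg, map_one, one_pow]
  refine ⟨⟨?_, ?_, ?_⟩, ?_, ?_, ?_⟩
  · rw [map_mul, map_mul, hneg, one_mul, map_pow, show N + N + 1 = 2 * N + 1 by ring]
    exact pade_bound_aux _ _ _ _ (by positivity)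
      ((hc N N N (by omega) (by omega) 1 (1 - u) h2 h1).trans hstep)
  · rw [map_mul, map_pow, show N + N + 1 = 2 * N + 1 by ring]
    exact pade_bound_aux _ _ _ _ (by positivity)
      ((hc N N N (by omega) (by omega) u 1 h0 h2).trans hstep)
  · rw [map_one, one_pow, mul_one]
    exact (hc N N N (by omega) (by omega) _ _ h0' h1).trans hstep
  · rw [map_mul, map_mul, hneg, one_mul, map_pow, show N + 1 + N + 1 = 2 * N + 1 + 1 by ring,
      pow_succ (f u), mul_assoc]
    refine pade_bound_aux _ _ _ _ (by positivity) ?_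
    have := hc (N + 1) N N (by omega) (by omega) 1 (1 - u) h2 h1
    calc f u * f (padP (N + 1) N N 1 (1 - u)) ≤ mx f u * (c * mx f u ^ N) := by
          apply mul_le_mul h0 this (f.nonneg _) (by linarith)
      _ = _ := by rw [pow_succ]; ring
  · rw [map_mul, map_pow, show N + N + 1 = 2 * N + 1 by ring]
    exact pade_bound_aux _ _ _ _ (by positivity)
      ((hc N N (N + 1) (by omega) (by omega) u 1 h0 h2))
  · rw [map_one, one_pow, mul_one]
    exact (hc (N + 1) N N (by omega) (by omega) _ _ h0' h1).trans hstep

theorem pade_main {K : Type*} [Field K] [CharZero K] (N : ℕ) (u y : K) (hu : u ≠ 0)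
    (hu1 : u ≠ 1) : ∃ U : Fin 3 → K, U 0 + U 1 = U 2 ∧ y * U 1 - (1 - y) * U 0 ≠ 0 ∧
    (∀ f : AbsoluteValue K ℝ, ∀ i,
      f (U i) ≤ 2 ^ (4 * N + 2) * f (cx u i) ^ (2 * N + 1) * mx f u ^ (N + 1)) ∧
    (∀ f : AbsoluteValue K ℝ, IsNonarchimedean f → ∀ i,
      f (U i) ≤ f (cx u i) ^ (2 * N + 1) * mx f u ^ (N + 1)) := by
  have hB1 : ∀ f : AbsoluteValue K ℝ, ∀ p q r : ℕ, p + q + r ≤ 3 * N + 1 → r ≤ N + 1 →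
      ∀ x y : K, f x ≤ mx f u → f y ≤ mx f u →
      f (padP p q r x y) ≤ 2 ^ (4 * N + 2) * mx f u ^ r := by
    intro f p q r h1 h2 x y hx hy
    refine (padP_abs f p q r x y _ hx hy).trans ?_
    have hm := one_le_mx f u
    have e1 : r + 1 ≤ 2 ^ r := by
      have := Nat.lt_two_pow_self (n := r); omega
    have e2 : ((r : ℝ) + 1) ≤ 2 ^ (N + 1) := by
      have : r + 1 ≤ 2 ^ (N + 1) := e1.trans (Nat.pow_le_pow_right (by norm_num) h2)
      exact_mod_cast this
    have e3 : (2 : ℝ) ^ (p + q + r) ≤ 2 ^ (3 * N + 1) := pow_le_pow_right₀ (by norm_num) h1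
    have e4 : ((r : ℝ) + 1) * 2 ^ (p + q + r) ≤ 2 ^ (4 * N + 2) := by
      calc _ ≤ (2 : ℝ) ^ (N + 1) * 2 ^ (3 * N + 1) := by gcongr
        _ = _ := by rw [← pow_add]; congr 1; ring
    gcongr
  have hB2 : ∀ f : AbsoluteValue K ℝ, IsNonarchimedean f → ∀ p q r : ℕ, p + q + r ≤ 3 * N + 1 →
      r ≤ N + 1 →
      ∀ x y : K, f x ≤ mx f u → f y ≤ mx f u →
      f (padP p q r x y) ≤ 1 * mx f u ^ r := by
    intro f hf p q r h1 h2 x y hx hy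
    rw [one_mul]
    exact padP_abs_na f hf p q r x y _ hx hy
  have hid := pade_ring N N N u
  have hid' := pade_ring (N + 1) N N u
  have hE := padE_ne_zero N u
  have h1u : (1 - u) ≠ 0 := sub_ne_zero.2 (Ne.symm hu1)
  by_cases hcase : y * ((1 - u) ^ (N + N + 1) * padP N N N u 1)
      - (1 - y) * ((-1) ^ N * u ^ (N + N + 1) * padP N N N 1 (1 - u)) = 0
  · refine ⟨![(-1) ^ N * u ^ (N + 1 + N + 1) * padP (N + 1) N N 1 (1 - u),
      (1 - u) ^ (N + N + 1) * padP N N (N + 1) u 1, padP (N + 1) N N (-u) (1 - u)],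
      hid', ?_, ?_, ?_⟩
    · intro h
      simp at h
      have hD : ((-1 : K) ^ N) * u ^ (2 * N + 1) * (1 - u) ^ (2 * N + 1) * padE N u = 0 := by
        have e : ((-1 : K) ^ N) * u ^ (2 * N + 1) * (1 - u) ^ (2 * N + 1) * padE N u =
          ((-1) ^ N * u ^ (N + N + 1) * padP N N N 1 (1 - u)) *
            ((1 - u) ^ (N + N + 1) * padP N N (N + 1) u 1)
          - ((1 - u) ^ (N + N + 1) * padP N N N u 1) *
            ((-1) ^ N * u ^ (N + 1 + N + 1) * padP (N + 1) N N 1 (1 - u)) := by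
          rw [padE]; ring
        rw [e]
        linear_combination (((-1) ^ N * u ^ (N + N + 1) * padP N N N 1 (1 - u)) +
          ((1 - u) ^ (N + N + 1) * padP N N N u 1)) * h
          - ((1 - u) ^ (N + N + 1) * padP N N (N + 1) u 1 +
            (-1) ^ N * u ^ (N + 1 + N + 1) * padP (N + 1) N N 1 (1 - u)) * hcase
      have : ((-1 : K) ^ N) ≠ 0 := pow_ne_zero _ (by simp)
      exact (mul_ne_zero (mul_ne_zero (mul_ne_zero this (pow_ne_zero _ hu))
        (pow_ne_zero _ h1u)) hE) hD
    · intro f i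
      obtain ⟨-, b0, b1, b2⟩ := pade_bounds N u f _ (hB1 f) (by positivity)
      fin_cases i
      · exact b0
      · exact b1
      · exact b2
    · intro f hf i
      obtain ⟨-, b0, b1, b2⟩ := pade_bounds N u f _ (hB2 f hf) (by positivity)
      rw [one_mul] at b0 b1 b2
      fin_cases i
      · exact b0
      · exact b1
      · exact b2
  · refine ⟨![(-1) ^ N * u ^ (N + N + 1) * padP N N N 1 (1 - u),
      (1 - u) ^ (N + N + 1) * padP N N N u 1, padP N N N (-u) (1 - u)],
      hid, hcase, ?_, ?_⟩
    · intro f i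
      obtain ⟨⟨b0, b1, b2⟩, -⟩ := pade_bounds N u f _ (hB1 f) (by positivity)
      fin_cases i
      · exact b0
      · exact b1
      · exact b2
    · intro f hf i
      obtain ⟨⟨b0, b1, b2⟩, -⟩ := pade_bounds N u f _ (hB2 f hf) (by positivity)
      rw [one_mul] at b0 b1 b2
      fin_cases i
      · exact b0
      · exact b1
      · exact b2

/-- signed coordinates with zero sum -/
def sx {K : Type*} [Field K] (u : K) : Fin 3 → K := ![u, 1 - u, -1]

theorem abs_sx {K : Type*} [Field K] (f : AbsoluteValue K ℝ) (u : K) (i : Fin 3) :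
    f (sx u i) = f (cx u i) := by
  fin_cases i <;> simp [sx, cx]

theorem cx_ne_zero {K : Type*} [Field K] {u : K} (h0 : u ≠ 0) (h1 : u ≠ 1) (i : Fin 3) :
    cx u i ≠ 0 := by
  fin_cases i
  · simpa [cx] using h0
  · simpa [cx] using sub_ne_zero.2 (Ne.symm h1)
  · simp [cx]

theorem sx_ne_zero {K : Type*} [Field K] {u : K} (h0 : u ≠ 0) (h1 : u ≠ 1) (i : Fin 3) :
    sx u i ≠ 0 := by
  fin_cases i
  · simpa [sx] using h0
  · simpa [sx] using sub_ne_zero.2 (Ne.symm h1)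
  · simp [sx]

theorem mx_pos {K : Type*} [Field K] (f : AbsoluteValue K ℝ) (u : K) : 0 < mx f u :=
  lt_of_lt_of_le one_pos (one_le_mx f u)

/-- the local logarithmic proximity -/
noncomputable def rr {K : Type*} [Field K] (f : AbsoluteValue K ℝ) (u : K) (i : Fin 3) : ℝ :=
  Real.log (mx f u) - Real.log (f (cx u i))

theorem rr_nonneg {K : Type*} [Field K] (f : AbsoluteValue K ℝ) {u : K} (h0 : u ≠ 0) (h1 : u ≠ 1)
    (i : Fin 3) : 0 ≤ rr f u i :=
  sub_nonneg.2 (Real.log_le_log (f.pos (cx_ne_zero h0 h1 i)) (cx_le_mx f u i))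

theorem pade_local {K : Type*} [Field K] (f : AbsoluteValue K ℝ) (l : ℝ)
    (hl : ∀ a b : K, f (a - b) ≤ Real.exp l * max (f a) (f b)) {u y : K} (hu0 : u ≠ 0)
    (hu1 : u ≠ 1) (hy0 : y ≠ 0) (hy1 : y ≠ 1) (N : ℕ) (U : Fin 3 → K) (hU : U 0 + U 1 = U 2)
    (hD : y * U 1 - (1 - y) * U 0 ≠ 0)
    (hb : ∀ i, f (U i) ≤ Real.exp ((4 * N + 2) * l) * f (cx u i) ^ (2 * N + 1) *
      mx f u ^ (N + 1)) (i : Fin 3) :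
    min ((2 * N + 1) * rr f u i) (rr f y i) - (4 * N + 3) * l ≤
      (3 * N + 2) * Real.log (mx f u) + Real.log (mx f y)
        - Real.log (f (y * U 1 - (1 - y) * U 0)) := by
  have hex : ∃ k, f (y * U 1 - (1 - y) * U 0) = f (cx y k * U i - cx y i * U k) := by
    fin_cases i
    · refine ⟨2, ?_⟩
      rw [← f.map_neg]; congr 1; simp [cx, ← hU]; ring
    · refine ⟨2, ?_⟩
      congr 1; simp [cx, ← hU]; ring
    · refine ⟨0, ?_⟩
      congr 1; simp [cx, ← hU]; ring
  obtain ⟨k, hk⟩ := hex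
  have hDpos := f.pos hD
  rw [hk] at hDpos ⊢
  set M := mx f u with hM
  set M' := mx f y with hM'
  have hMp : 0 < M := mx_pos f u
  have hMp' : 0 < M' := mx_pos f y
  have hxi := f.pos (cx_ne_zero hu0 hu1 i)
  have hyi := f.pos (cx_ne_zero hy0 hy1 i)
  set E := Real.exp ((4 * N + 2) * l) with hE
  have hEp : 0 < E := Real.exp_pos _
  have hUi : f (cx y k * U i) ≤ M' * (E * f (cx u i) ^ (2 * N + 1) * M ^ (N + 1)) := by
    rw [map_mul]
    exact mul_le_mul (cx_le_mx f y k) (hb i) (f.nonneg _) hMp'.le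
  have hUk : f (cx y i * U k) ≤ f (cx y i) * (E * M ^ (2 * N + 1) * M ^ (N + 1)) := by
    rw [map_mul]
    refine mul_le_mul_of_nonneg_left ((hb k).trans ?_) hyi.le
    have := cx_le_mx f u k
    have := f.nonneg (cx u k)
    gcongr
  have l1 : Real.log (M' * (E * f (cx u i) ^ (2 * N + 1) * M ^ (N + 1))) =
      (3 * N + 2) * Real.log M + Real.log M' + (4 * N + 2) * l - (2 * N + 1) * rr f u i := by
    rw [Real.log_mul (by positivity) (by positivity), Real.log_mul (by positivity) (by positivity),
      Real.log_mul (by positivity) (by positivity), Real.log_pow, Real.log_pow, hE, Real.log_exp,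
      rr]
    push_cast
    ring
  have l2 : Real.log (f (cx y i) * (E * M ^ (2 * N + 1) * M ^ (N + 1))) =
      (3 * N + 2) * Real.log M + Real.log M' + (4 * N + 2) * l - rr f y i := by
    rw [Real.log_mul (by positivity) (by positivity), Real.log_mul (by positivity) (by positivity),
      Real.log_mul (by positivity) (by positivity), Real.log_pow, Real.log_pow, hE, Real.log_exp,
      rr]
    push_cast
    ring
  have hmain := hl (cx y k * U i) (cx y i * U k)
  rcases le_total (f (cx y k * U i)) (f (cx y i * U k)) with hc | hc
  · rw [max_eq_right hc] at hmain
    have h3 := Real.log_le_log hDpos (hmain.trans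
      (mul_le_mul_of_nonneg_left hUk (Real.exp_pos l).le))
    rw [Real.log_mul (Real.exp_pos l).ne' (by positivity), Real.log_exp, l2] at h3
    have := min_le_right ((2 * N + 1) * rr f u i) (rr f y i)
    linarith
  · rw [max_eq_left hc] at hmain
    have h3 := Real.log_le_log hDpos (hmain.trans
      (mul_le_mul_of_nonneg_left hUi (Real.exp_pos l).le))
    rw [Real.log_mul (Real.exp_pos l).ne' (by positivity), Real.log_exp, l1] at h3
    have := min_le_left ((2 * N + 1) * rr f u i) (rr f y i)
    linarith

/-- nonarchimedean: trichotomy -/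
theorem na_cases {K : Type*} [Field K] (f : AbsoluteValue K ℝ) (hf : IsNonarchimedean f) (u : K) :
    (f u ≤ 1 ∧ f (1 - u) = 1 ∧ mx f u = 1) ∨ (f u = 1 ∧ f (1 - u) ≤ 1 ∧ mx f u = 1) ∨
      (1 ≤ f u ∧ f (1 - u) = f u ∧ mx f u = f u) := by
  have h1 : f (1 - u) ≤ max 1 (f u) := by
    have := hf 1 (-u)
    rwa [f.map_neg, f.map_one, ← sub_eq_add_neg] at this
  have h2 : (1 : ℝ) ≤ max (f u) (f (1 - u)) := by
    have := hf u (1 - u)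
    rwa [add_sub_cancel, f.map_one] at this
  have h3 : f u ≤ max 1 (f (1 - u)) := by
    have := hf 1 (-(1 - u))
    rw [f.map_neg, f.map_one] at this
    simpa using this
  unfold mx
  rcases lt_trichotomy (f u) 1 with h | h | h
  · left
    rw [max_eq_left h.le] at h1
    have h4 : f (1 - u) = 1 := by
      rcases le_max_iff.1 h2 with h5 | h5
      · linarith
      · linarith
    exact ⟨h.le, h4, by rw [h4, max_eq_right h.le, max_self]⟩
  · right; left
    rw [h, max_self] at h1
    refine ⟨h, h1, ?_⟩
    rw [h, max_eq_left h1, max_self]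
  · right; right
    have h4 : f (1 - u) = f u := by
      rw [max_eq_right h.le] at h1
      rcases le_max_iff.1 h3 with h5 | h5
      · linarith
      · linarith
    refine ⟨h.le, h4, ?_⟩
    rw [h4, max_self, max_eq_left h.le]

theorem na_sub {K : Type*} [Field K] {f : AbsoluteValue K ℝ} (hf : IsNonarchimedean f) (a b : K) :
    f (a - b) ≤ max (f a) (f b) := by
  have := hf a (-b)
  rwa [f.map_neg, ← sub_eq_add_neg] at this

theorem extra_pade {K : Type*} [Field K] (f : AbsoluteValue K ℝ) (hf : IsNonarchimedean f)
    {u y : K} (h0 : f u = f y) (h1 : f (1 - u) = f (1 - y))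
    (N : ℕ) (U : Fin 3 → K) (hU : U 0 + U 1 = U 2)
    (hb : ∀ i, f (U i) ≤ f (cx u i) ^ (2 * N + 1) * mx f u ^ (N + 1)) :
    f (y * U 1 - (1 - y) * U 0) ≤ f u * f (1 - u) * mx f u ^ (3 * N) := by
  have b0 := hb 0
  have b1 := hb 1
  have b2 := hb 2
  simp only [cx, Matrix.cons_val_zero, Matrix.cons_val_one, Matrix.cons_val_two,
    Matrix.head_cons, Matrix.tail_cons, map_one, one_pow, one_mul] at b0 b1 b2
  have e0 : y * U 1 - (1 - y) * U 0 = y * U 2 - U 0 := by rw [← hU]; ring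
  have e1 : y * U 1 - (1 - y) * U 0 = U 1 - (1 - y) * U 2 := by rw [← hU]; ring
  have hu := f.nonneg u
  have h1u := f.nonneg (1 - u)
  rcases na_cases f hf u with ⟨c1, c2, c3⟩ | ⟨c1, c2, c3⟩ | ⟨c1, c2, c3⟩
  · rw [c3] at b0 b2 ⊢
    rw [c2, e0]
    simp only [one_pow, mul_one] at b0 b2 ⊢
    refine (na_sub hf _ _).trans (max_le ?_ ?_)
    · rw [map_mul, ← h0]
      nlinarith [f.nonneg (U 2)]
    · refine b0.trans ?_
      exact pow_le_of_le_one hu c1 (by omega)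
  · rw [c3] at b1 b2 ⊢
    rw [c1, e1]
    simp only [one_pow, mul_one, one_mul] at b1 b2 ⊢
    refine (na_sub hf _ _).trans (max_le ?_ ?_)
    · refine b1.trans ?_
      exact pow_le_of_le_one h1u c2 (by omega)
    · rw [map_mul, ← h1]
      nlinarith [f.nonneg (U 2)]
  · rw [c3] at b0 b2 ⊢
    rw [c2, e0]
    refine (na_sub hf _ _).trans (max_le ?_ ?_)
    · rw [map_mul, ← h0]
      calc f u * f (U 2) ≤ f u * f u ^ (N + 1) := by gcongr
        _ = f u ^ (N + 2) := by ring
        _ ≤ f u ^ (3 * N + 2) := pow_le_pow_right₀ c1 (by omega)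
        _ = _ := by ring
    · calc _ ≤ _ := b0
        _ = _ := by ring

theorem extra_sub {K : Type*} [Field K] (f : AbsoluteValue K ℝ) (hf : IsNonarchimedean f)
    {u y : K} (h0 : f u = f y) (h1 : f (1 - u) = f (1 - y)) :
    f (u - y) * mx f u ≤ f u * f (1 - u) := by
  have hu := f.nonneg u
  rcases na_cases f hf u with ⟨c1, c2, c3⟩ | ⟨c1, c2, c3⟩ | ⟨c1, c2, c3⟩
  · rw [c2, c3, mul_one, mul_one]
    refine (na_sub hf _ _).trans (by rw [h0, max_self])
  · rw [c1, c3, mul_one, one_mul, show u - y = (1 - y) - (1 - u) by ring]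
    refine (na_sub hf _ _).trans (by rw [h1, max_self])
  · rw [c2, c3]
    refine mul_le_mul_of_nonneg_right ?_ hu
    refine (na_sub hf _ _).trans (by rw [h0, max_self])

/-- sorting permutation -/
noncomputable def srt {K : Type*} [Field K] (f : AbsoluteValue K ℝ) (u : K) : Equiv.Perm (Fin 3) :=
  Tuple.sort (fun i => f (sx u i))

theorem srt_01 {K : Type*} [Field K] (f : AbsoluteValue K ℝ) (u : K) :
    f (sx u (srt f u 0)) ≤ f (sx u (srt f u 1)) :=
  Tuple.monotone_sort (fun i => f (sx u i)) (show (0 : Fin 3) ≤ 1 by decide)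

theorem srt_12 {K : Type*} [Field K] (f : AbsoluteValue K ℝ) (u : K) :
    f (sx u (srt f u 1)) ≤ f (sx u (srt f u 2)) :=
  Tuple.monotone_sort (fun i => f (sx u i)) (show (1 : Fin 3) ≤ 2 by decide)

theorem srt_mx {K : Type*} [Field K] (f : AbsoluteValue K ℝ) (u : K) :
    f (sx u (srt f u 2)) = mx f u := by
  apply le_antisymm
  · rw [abs_sx]; exact cx_le_mx f u _
  · have hall : ∀ i, f (sx u i) ≤ f (sx u (srt f u 2)) := by
      intro i
      obtain ⟨j, rfl⟩ := (srt f u).surjective i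
      exact Tuple.monotone_sort (fun i => f (sx u i)) (Fin.le_last j)
    refine max_le (max_le (hall 0) (hall 1)) ?_
    have := hall 2
    simpa [sx] using this

theorem sx_sum {K : Type*} [Field K] (u : K) (σ : Equiv.Perm (Fin 3)) :
    sx u (σ 0) + sx u (σ 1) + sx u (σ 2) = 0 := by
  have h1 : ∑ i, sx u (σ i) = ∑ i, sx u i := Equiv.sum_comp σ (sx u)
  rw [Fin.sum_univ_three, Fin.sum_univ_three] at h1
  rw [h1]; simp [sx]

theorem rr_sum {K : Type*} [Field K] (f : AbsoluteValue K ℝ) (u : K) :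
    ∑ i, rr f u i = rr f u (srt f u 0) + rr f u (srt f u 1) := by
  rw [← Equiv.sum_comp (srt f u) (rr f u), Fin.sum_univ_three]
  have : rr f u (srt f u 2) = 0 := by
    rw [rr, ← abs_sx, srt_mx, sub_self]
  rw [this, add_zero]

theorem rr_mid {K : Type*} [Field K] (f : AbsoluteValue K ℝ) (l : ℝ)
    (hl : ∀ a b : K, f (a - b) ≤ Real.exp l * max (f a) (f b)) {u : K} (h0 : u ≠ 0) (h1 : u ≠ 1) :
    rr f u (srt f u 1) ≤ l := by
  have hs := sx_sum u (srt f u)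
  have h2 : -sx u (srt f u 2) = sx u (srt f u 0) - (-sx u (srt f u 1)) := by
    linear_combination -hs
  have h3 : mx f u ≤ Real.exp l * f (sx u (srt f u 1)) := by
    have := hl (sx u (srt f u 0)) (-sx u (srt f u 1))
    rwa [← h2, f.map_neg, f.map_neg, max_eq_right (srt_01 f u), srt_mx] at this
  have h4 := Real.log_le_log (mx_pos f u) h3
  rw [Real.log_mul (Real.exp_pos _).ne' (f.pos (sx_ne_zero h0 h1 _)).ne', Real.log_exp, abs_sx] at h4
  rw [rr]; linarith

theorem sx_minor {K : Type*} [Field K] (u y : K) (i j : Fin 3) (hij : i ≠ j) :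
    sx u i * sx y j - sx u j * sx y i = u - y ∨ sx u i * sx y j - sx u j * sx y i = -(u - y) := by
  fin_cases i <;> fin_cases j <;> simp [sx] at hij ⊢ <;>
    first | (left; ring1) | (right; ring1)

/-- the normalised ratio at an archimedean place -/
noncomputable def zz {K : Type*} [Field K] (φ : K →+* ℂ) (f : AbsoluteValue K ℝ) (u : K) : ℂ :=
  φ (sx u (srt f u 0)) / φ (sx u (srt f u 2))


theorem zz_sub {K : Type*} [Field K] (φ : K →+* ℂ) (f : AbsoluteValue K ℝ)
    (hφ : ∀ x, f x = ‖φ x‖) {u y : K} (hu0 : u ≠ 0) (hu1 : u ≠ 1) (hy0 : y ≠ 0) (hy1 : y ≠ 1)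
    (hs : srt f u = srt f y) : f (u - y) = mx f u * mx f y * ‖zz φ f u - zz φ f y‖ := by
  have n1 : φ (sx u (srt f u 2)) ≠ 0 := by
    rw [map_ne_zero]; exact sx_ne_zero hu0 hu1 _
  have n2 : φ (sx y (srt f u 2)) ≠ 0 := by
    rw [map_ne_zero]; exact sx_ne_zero hy0 hy1 _
  have e : zz φ f u - zz φ f y = φ (sx u (srt f u 0) * sx y (srt f u 2) -
      sx u (srt f u 2) * sx y (srt f u 0)) / (φ (sx u (srt f u 2)) * φ (sx y (srt f u 2))) := by
    rw [zz, zz, ← hs, map_sub, map_mul, map_mul]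
    field_simp
  rw [e, norm_div, norm_mul, ← hφ, ← hφ, ← hφ]
  have e2 : f (sx u (srt f u 0) * sx y (srt f u 2) -
      sx u (srt f u 2) * sx y (srt f u 0)) = f (u - y) := by
    rcases sx_minor u y (srt f u 0) (srt f u 2) (by simp) with h | h
    · rw [h]
    · rw [h, f.map_neg]
  rw [e2, srt_mx, hs, srt_mx]
  have := mx_pos f u
  have := mx_pos f y
  field_simp

theorem zz_lens {K : Type*} [Field K] (φ : K →+* ℂ) (f : AbsoluteValue K ℝ)
    (hφ : ∀ x, f x = ‖φ x‖) {u : K} (hu0 : u ≠ 0) (hu1 : u ≠ 1) :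
    -(1 / 2) ≤ (zz φ f u).re ∧ (zz φ f u).re ≤ 0 ∧ (zz φ f u).im ^ 2 ≤ 3 / 4 := by
  have n1 : φ (sx u (srt f u 2)) ≠ 0 := by
    rw [map_ne_zero]; exact sx_ne_zero hu0 hu1 _
  have hs := sx_sum u (srt f u)
  have e : φ (sx u (srt f u 1)) / φ (sx u (srt f u 2)) = -(1 + zz φ f u) := by
    have := congrArg φ hs
    rw [map_add φ, map_add φ, map_zero φ] at this
    rw [zz]
    field_simp
    linear_combination this
  have hp : 0 < ‖φ (sx u (srt f u 2))‖ := norm_pos_iff.2 n1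
  have a1 : ‖zz φ f u‖ ≤ ‖1 + zz φ f u‖ := by
    rw [← norm_neg (1 + _), ← e, zz, norm_div, norm_div, ← hφ, ← hφ, ← hφ]
    rw [← hφ] at hp
    have := srt_01 f u
    gcongr
  have a2 : ‖1 + zz φ f u‖ ≤ 1 := by
    rw [← norm_neg (1 + _), ← e, norm_div, div_le_one hp, ← hφ, ← hφ]
    exact srt_12 f u
  have b1 : ‖zz φ f u‖ ^ 2 ≤ ‖1 + zz φ f u‖ ^ 2 := by gcongr
  have b2 : ‖1 + zz φ f u‖ ^ 2 ≤ 1 := by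
    have := norm_nonneg (1 + zz φ f u); nlinarith
  rw [Complex.sq_norm, Complex.normSq_apply] at b1 b2
  rw [Complex.sq_norm, Complex.normSq_apply] at b1
  simp only [Complex.add_re, Complex.add_im, Complex.one_re, Complex.one_im, zero_add] at b1 b2
  have c1 : -(1 / 2) ≤ (zz φ f u).re := by nlinarith
  have c2 : (zz φ f u).re ≤ 0 := by nlinarith [sq_nonneg (zz φ f u).im, sq_nonneg (zz φ f u).re]
  exact ⟨c1, c2, by nlinarith⟩

theorem zz_norm {K : Type*} [Field K] (φ : K →+* ℂ) (f : AbsoluteValue K ℝ)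
    (hφ : ∀ x, f x = ‖φ x‖) (u : K) : ‖zz φ f u‖ * mx f u = f (cx u (srt f u 0)) := by
  rw [zz, norm_div, ← hφ, ← hφ, srt_mx, abs_sx, div_mul_cancel₀ _ (mx_pos f u).ne']

theorem arch_quadrant {K : Type*} [Field K] (φ : K →+* ℂ) (f : AbsoluteValue K ℝ)
    (hφ : ∀ x, f x = ‖φ x‖) {u y : K} (hu0 : u ≠ 0) (hu1 : u ≠ 1) (hy0 : y ≠ 0) (hy1 : y ≠ 1)
    (huy : u ≠ y) (hs : srt f u = srt f y)
    (hsign : (0 ≤ (zz φ f u).im) ↔ (0 ≤ (zz φ f y).im)) :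
    min (rr f u (srt f u 0)) (rr f y (srt f y 0)) - Real.log 2 / 2 ≤
      Real.log (mx f u) + Real.log (mx f y) - Real.log (f (u - y)) := by
  obtain ⟨a1, a2, -⟩ := zz_lens φ f hφ hu0 hu1
  obtain ⟨b1, b2, -⟩ := zz_lens φ f hφ hy0 hy1
  have him : 0 ≤ (zz φ f u).im * (zz φ f y).im := by
    by_cases h : 0 ≤ (zz φ f u).im
    · exact mul_nonneg h (hsign.1 h)
    · have h' : ¬ 0 ≤ (zz φ f y).im := fun hh => h (hsign.2 hh)
      push Not at h h'
      exact (mul_pos_of_neg_of_neg h h').le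
  have key : ‖zz φ f u - zz φ f y‖ ^ 2 ≤ ‖zz φ f u‖ ^ 2 + ‖zz φ f y‖ ^ 2 := by
    rw [Complex.sq_norm, Complex.sq_norm, Complex.sq_norm, Complex.normSq_apply,
      Complex.normSq_apply, Complex.normSq_apply, Complex.sub_re, Complex.sub_im]
    nlinarith
  have hsub := zz_sub φ f hφ hu0 hu1 hy0 hy1 hs
  have hM := mx_pos f u
  have hM' := mx_pos f y
  have hpos := f.pos (sub_ne_zero.2 huy)
  have hzpos : 0 < ‖zz φ f u - zz φ f y‖ := by
    rw [hsub] at hpos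
    by_contra hc
    have : ‖zz φ f u - zz φ f y‖ = 0 := le_antisymm (not_lt.1 hc) (norm_nonneg _)
    rw [this, mul_zero] at hpos
    exact lt_irrefl _ hpos
  have r1 : Real.log ‖zz φ f u‖ = - rr f u (srt f u 0) := by
    have hz : ‖zz φ f u‖ = f (cx u (srt f u 0)) / mx f u := by
      rw [eq_div_iff hM.ne']; exact zz_norm φ f hφ u
    rw [hz, Real.log_div (f.pos (cx_ne_zero hu0 hu1 _)).ne' hM.ne', rr]; ring
  have r2 : Real.log ‖zz φ f y‖ = - rr f y (srt f y 0) := by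
    have hz : ‖zz φ f y‖ = f (cx y (srt f y 0)) / mx f y := by
      rw [eq_div_iff hM'.ne']; exact zz_norm φ f hφ y
    rw [hz, Real.log_div (f.pos (cx_ne_zero hy0 hy1 _)).ne' hM'.ne', rr]; ring
  rw [hsub, Real.log_mul (by positivity) hzpos.ne', Real.log_mul hM.ne' hM'.ne']
  have hfin : ∀ c : ℝ, 0 < c → ‖zz φ f u - zz φ f y‖ ^ 2 ≤ 2 * c ^ 2 →
      Real.log ‖zz φ f u - zz φ f y‖ ≤ Real.log 2 / 2 + Real.log c := by
    intro c hc h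
    have := Real.log_le_log (by positivity) h
    rw [Real.log_pow, Real.log_mul (by norm_num) (by positivity), Real.log_pow] at this
    push_cast at this
    linarith
  rcases le_total ‖zz φ f u‖ ‖zz φ f y‖ with hc | hc
  · have hyp : 0 < ‖zz φ f y‖ := by
      by_contra hcc
      have h0 : ‖zz φ f y‖ = 0 := le_antisymm (not_lt.1 hcc) (norm_nonneg _)
      have h0' : ‖zz φ f u‖ = 0 := le_antisymm (h0 ▸ hc) (norm_nonneg _)
      rw [h0, h0'] at key
      nlinarith
    have := hfin _ hyp (by nlinarith [norm_nonneg (zz φ f u)])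
    have := min_le_right (rr f u (srt f u 0)) (rr f y (srt f y 0))
    linarith
  · have hup : 0 < ‖zz φ f u‖ := by
      by_contra hcc
      have h0 : ‖zz φ f u‖ = 0 := le_antisymm (not_lt.1 hcc) (norm_nonneg _)
      have h0' : ‖zz φ f y‖ = 0 := le_antisymm (h0 ▸ hc) (norm_nonneg _)
      rw [h0, h0'] at key
      nlinarith
    have := hfin _ hup (by nlinarith [norm_nonneg (zz φ f y)])
    have := min_le_left (rr f u (srt f u 0)) (rr f y (srt f y 0))
    linarith

theorem gen_sub {K : Type*} [Field K] (f : AbsoluteValue K ℝ) (l : ℝ)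
    (hl : ∀ a b : K, f (a - b) ≤ Real.exp l * max (f a) (f b)) {u y : K} (hu0 : u ≠ 0)
    (hu1 : u ≠ 1) (hy0 : y ≠ 0) (hy1 : y ≠ 1) (huy : u ≠ y) (hs : srt f u = srt f y) :
    min (rr f u (srt f u 0)) (rr f y (srt f y 0)) - l ≤
      Real.log (mx f u) + Real.log (mx f y) - Real.log (f (u - y)) := by
  have hpos := f.pos (sub_ne_zero.2 huy)
  have hM := mx_pos f u
  have hM' := mx_pos f y
  have hmain : f (u - y) ≤ Real.exp l *
      max (f (cx u (srt f u 0)) * mx f y) (mx f u * f (cx y (srt f y 0))) := by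
    have h1 : f (u - y) = f (sx u (srt f u 0) * sx y (srt f u 2) -
        sx u (srt f u 2) * sx y (srt f u 0)) := by
      rcases sx_minor u y (srt f u 0) (srt f u 2) (by simp) with h | h
      · rw [h]
      · rw [h, f.map_neg]
    rw [h1]
    refine (hl _ _).trans (le_of_eq ?_)
    rw [map_mul, map_mul, srt_mx, hs, srt_mx, abs_sx, abs_sx]
  have hxi := f.pos (cx_ne_zero hu0 hu1 (srt f u 0))
  have hyi := f.pos (cx_ne_zero hy0 hy1 (srt f y 0))
  rcases le_total (f (cx u (srt f u 0)) * mx f y) (mx f u * f (cx y (srt f y 0))) with hc | hc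
  · rw [max_eq_right hc] at hmain
    have h3 := Real.log_le_log hpos hmain
    rw [Real.log_mul (Real.exp_pos l).ne' (by positivity), Real.log_exp,
      Real.log_mul (by positivity) (by positivity)] at h3
    have := min_le_right (rr f u (srt f u 0)) (rr f y (srt f y 0))
    have e : rr f y (srt f y 0) = Real.log (mx f y) - Real.log (f (cx y (srt f y 0))) := rfl
    linarith
  · rw [max_eq_left hc] at hmain
    have h3 := Real.log_le_log hpos hmain
    rw [Real.log_mul (Real.exp_pos l).ne' (by positivity), Real.log_exp,
      Real.log_mul (by positivity) (by positivity)] at h3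
    have := min_le_left (rr f u (srt f u 0)) (rr f y (srt f y 0))
    have e : rr f u (srt f u 0) = Real.log (mx f u) - Real.log (f (cx u (srt f u 0))) := rfl
    linarith

theorem na_sub_mx {K : Type*} [Field K] (f : AbsoluteValue K ℝ) (hf : IsNonarchimedean f)
    {u y : K} (huy : u ≠ y) :
    0 ≤ Real.log (mx f u) + Real.log (mx f y) - Real.log (f (u - y)) := by
  have hpos := f.pos (sub_ne_zero.2 huy)
  have hM := one_le_mx f u
  have hM' := one_le_mx f y
  have h1 : f u ≤ mx f u := cx_le_mx f u 0
  have h2 : f y ≤ mx f y := cx_le_mx f y 0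
  have h3 : f (u - y) ≤ mx f u * mx f y := by
    refine (na_sub hf u y).trans (max_le ?_ ?_) <;> nlinarith
  have h4 := Real.log_le_log hpos h3
  rw [Real.log_mul (mx_pos f u).ne' (mx_pos f y).ne'] at h4
  linarith

theorem na_hl {K : Type*} [Field K] (f : AbsoluteValue K ℝ) (hf : IsNonarchimedean f) (a b : K) :
    f (a - b) ≤ Real.exp 0 * max (f a) (f b) := by
  rw [Real.exp_zero, one_mul]; exact na_sub hf a b

theorem arch_hl {K : Type*} [Field K] (f : AbsoluteValue K ℝ) (a b : K) :
    f (a - b) ≤ Real.exp (Real.log 2) * max (f a) (f b) := by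
  rw [Real.exp_log (by norm_num)]
  have h1 := f.add_le a (-b)
  rw [f.map_neg, ← sub_eq_add_neg] at h1
  have := le_max_left (f a) (f b)
  have := le_max_right (f a) (f b)
  linarith

/-- cells for small solutions -/
noncomputable def cell {K : Type*} [Field K] (φ : K →+* ℂ) (f : AbsoluteValue K ℝ) (u : K) :
    Equiv.Perm (Fin 3) × ℕ × ℕ :=
  (srt f u, ⌊21 * (-(zz φ f u).re)⌋₊, ⌊20 * ((zz φ f u).im + 0.87)⌋₊)

theorem cell_mem {K : Type*} [Field K] (φ : K →+* ℂ) (f : AbsoluteValue K ℝ)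
    (hφ : ∀ x, f x = ‖φ x‖) {u : K} (hu0 : u ≠ 0) (hu1 : u ≠ 1) :
    cell φ f u ∈ (Finset.univ : Finset (Equiv.Perm (Fin 3))) ×ˢ Finset.range 11 ×ˢ
      Finset.range 35 := by
  obtain ⟨a1, a2, a3⟩ := zz_lens φ f hφ hu0 hu1
  have i1 : (zz φ f u).im ≤ 0.87 := by nlinarith
  have i2 : -0.87 ≤ (zz φ f u).im := by nlinarith
  simp only [cell, Finset.mem_product, Finset.mem_univ, Finset.mem_range, true_and]
  constructor
  · rw [Nat.floor_lt (by linarith)]; push_cast; linarith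
  · rw [Nat.floor_lt (by linarith)]; push_cast; linarith

theorem floor_close {x y : ℝ} (hx : 0 ≤ x) (hy : 0 ≤ y) (h : ⌊x⌋₊ = ⌊y⌋₊) : (x - y) ^ 2 ≤ 1 := by
  have h1 := Nat.floor_le hx
  have h2 := Nat.lt_floor_add_one x
  have h3 := Nat.floor_le hy
  have h4 := Nat.lt_floor_add_one y
  rw [h] at h1 h2
  nlinarith

theorem cell_close {K : Type*} [Field K] (φ : K →+* ℂ) (f : AbsoluteValue K ℝ)
    (hφ : ∀ x, f x = ‖φ x‖) {u y : K} (hu0 : u ≠ 0) (hu1 : u ≠ 1) (hy0 : y ≠ 0) (hy1 : y ≠ 1)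
    (huy : u ≠ y) (hc : cell φ f u = cell φ f y) :
    Real.log 14.4 ≤ Real.log (mx f u) + Real.log (mx f y) - Real.log (f (u - y)) := by
  obtain ⟨a1, a2, a3⟩ := zz_lens φ f hφ hu0 hu1
  obtain ⟨b1, b2, b3⟩ := zz_lens φ f hφ hy0 hy1
  simp only [cell, Prod.mk.injEq] at hc
  obtain ⟨c1, c2, c3⟩ := hc
  have d1 := floor_close (by linarith) (by linarith) c2
  have d2 := floor_close (by nlinarith) (by nlinarith) c3
  have hpos := f.pos (sub_ne_zero.2 huy)
  have hM := mx_pos f u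
  have hM' := mx_pos f y
  have key : (14.4 * ‖zz φ f u - zz φ f y‖) ^ 2 ≤ 1 := by
    rw [mul_pow, Complex.sq_norm, Complex.normSq_apply, Complex.sub_re, Complex.sub_im]
    nlinarith
  have key2 : 14.4 * ‖zz φ f u - zz φ f y‖ ≤ 1 := by
    nlinarith [norm_nonneg (zz φ f u - zz φ f y)]
  have h3 : 14.4 * f (u - y) ≤ mx f u * mx f y := by
    rw [zz_sub φ f hφ hu0 hu1 hy0 hy1 c1]
    have := mul_le_mul_of_nonneg_left key2 (mul_pos hM hM').le
    linarith
  have h4 := Real.log_le_log (by positivity) h3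
  rw [Real.log_mul hM.ne' hM'.ne', Real.log_mul (by norm_num) hpos.ne'] at h4
  linarith

theorem log_num : 2.66 ≤ Real.log 14.4 := by
  have h1 : (2 : ℝ) ^ 96 ≤ 14.4 ^ 25 := by norm_num
  have h2 := Real.log_le_log (by positivity) h1
  rw [Real.log_pow, Real.log_pow] at h2
  have := Real.log_two_gt_d9
  push_cast at h2
  linarith

theorem rr_sum' {K : Type*} [Field K] (f : AbsoluteValue K ℝ) (u : K) :
    ∑ i, rr f u i = 3 * Real.log (mx f u) - Real.log (f u) - Real.log (f (1 - u)) := by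
  rw [Fin.sum_univ_three]
  simp [rr, cx]
  ring

theorem chain_max {α : Type*} (g : α → ℝ) (G : ℝ) (n : ℕ) :
    ∀ Y : Finset α, Y.card = n + 1 → (∀ z ∈ Y, G ≤ g z) →
      (∀ z ∈ Y, ∀ z' ∈ Y, z ≠ z' → g z ≤ g z' → 1.85 * g z ≤ g z') →
      ∃ z ∈ Y, 1.85 ^ n * G ≤ g z := by
  induction n with
  | zero =>
    intro Y hY h1 _
    obtain ⟨z, hz⟩ := Finset.card_pos.1 (by omega : 0 < Y.card)
    exact ⟨z, hz, by simpa using h1 z hz⟩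
  | succ n ih =>
    intro Y hY h1 h2
    obtain ⟨m, hm, hmax⟩ := Finset.exists_max_image Y g (Finset.card_pos.1 (by omega))
    obtain ⟨z, hz, hzG⟩ := ih (Y.erase m) (by rw [Finset.card_erase_of_mem hm]; omega)
      (fun z hz => h1 z (Finset.mem_of_mem_erase hz))
      (fun z hz z' hz' => h2 z (Finset.mem_of_mem_erase hz) z' (Finset.mem_of_mem_erase hz'))
    refine ⟨m, hm, ?_⟩
    have := h2 z (Finset.mem_of_mem_erase hz) m hm (Finset.ne_of_mem_erase hz)
      (hmax z (Finset.mem_of_mem_erase hz))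
    rw [pow_succ]
    nlinarith

theorem gap_fiber {α : Type*} (Y : Finset α) (h : α → ℝ) (a d : ℝ) (hd : 0 < d)
    (ha3 : ∀ z ∈ Y, a ≤ 3 * h z) (h133 : ∀ z ∈ Y, 1.33 * d ≤ h z)
    (gap : ∀ z ∈ Y, ∀ z' ∈ Y, z ≠ z' → h z ≤ h z' → 1.85 * h z - 1.0051 * d ≤ h z')
    (big : ∀ z ∈ Y, ∀ z' ∈ Y, z ≠ z' → ∀ N : ℕ, 5 ≤ N → (2 * N + 1) * h z ≤ h z' →
      h z' < (2 * N + 3) * h z →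
      0.95 * ((2 * N + 1) * (3 * h z - a - 0.7 * d)) ≤
        (3 * N + 2) * h z + h z' + 0.7 * (4 * N + 3) * d) : Y.card ≤ 24 := by
  by_contra hcard
  push Not at hcard
  set g : α → ℝ := fun z => h z - 1.19 * d with hg
  have hgap : ∀ z ∈ Y, ∀ z' ∈ Y, z ≠ z' → g z ≤ g z' → 1.85 * g z ≤ g z' := by
    intro z hz z' hz' hne hle
    have := gap z hz z' hz' hne (by simp only [hg] at hle; linarith)
    simp only [hg]; linarith
  have hY : Y.Nonempty := Finset.card_pos.1 (by omega)
  obtain ⟨m, hm, hmin⟩ := Finset.exists_min_image Y g hY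
  have hm1 : 0.14 * d ≤ g m := by have := h133 m hm; simp only [hg]; linarith
  have hm2 : a / 30 ≤ g m := by
    have := h133 m hm; have := ha3 m hm; simp only [hg]; linarith
  have hgm : 0 < g m := by nlinarith
  -- small part
  have hsmall : (Y.filter (fun z => g z < 1.85 ^ 20 * g m)).card ≤ 20 := by
    by_contra hc
    push Not at hc
    obtain ⟨Y', hY', hc'⟩ := Finset.exists_subset_card_eq (show 21 ≤ _ from hc)
    have hsub : ∀ z ∈ Y', z ∈ Y := fun z hz => (Finset.mem_filter.1 (hY' hz)).1
    obtain ⟨z, hz, hzG⟩ := chain_max g (g m) 20 Y' hc' (fun z hz => hmin z (hsub z hz))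
      (fun z hz z' hz' => hgap z (hsub z hz) z' (hsub z' hz'))
    exact absurd (Finset.mem_filter.1 (hY' hz)).2 (not_lt.2 hzG)
  have hsplit := Finset.card_filter_add_card_filter_not (s := Y) (fun z => g z < 1.85 ^ 20 * g m)
  obtain ⟨Y', hY', hc'⟩ := Finset.exists_subset_card_eq
    (show 5 ≤ (Y.filter (fun z => ¬ g z < 1.85 ^ 20 * g m)).card by omega)
  have hsub : ∀ z ∈ Y', z ∈ Y := fun z hz => (Finset.mem_filter.1 (hY' hz)).1
  obtain ⟨x, hx, hxmin⟩ := Finset.exists_min_image Y' g (Finset.card_pos.1 (by omega))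
  have hxbig : 1.85 ^ 20 * g m ≤ g x := not_lt.1 (Finset.mem_filter.1 (hY' hx)).2
  have hx0 : 100000 * g m ≤ g x := by
    refine le_trans ?_ hxbig
    have : (100000 : ℝ) ≤ 1.85 ^ 20 := by norm_num
    nlinarith
  obtain ⟨y, hy, hyG⟩ := chain_max g (g x) 4 Y' hc' hxmin
      (fun z hz z' hz' => hgap z (hsub z hz) z' (hsub z' hz'))
  have hy0 : 11.7 * g x ≤ g y := by
    refine le_trans ?_ hyG
    have : (11.7 : ℝ) ≤ 1.85 ^ 4 := by norm_num
    nlinarith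
  have hne : x ≠ y := by
    rintro rfl; nlinarith
  have hxd : 14000 * d ≤ g x := by linarith
  have hxa : 3000 * a ≤ g x := by linarith
  have ehx : h x = g x + 1.19 * d := by simp [hg]
  have ehy : h y = g y + 1.19 * d := by simp [hg]
  have hxpos : 0 < h x := by rw [ehx]; linarith
  have hratio : 11 * h x ≤ h y := by rw [ehx, ehy]; linarith
  -- choose N
  set t : ℝ := (h y / h x - 1) / 2 with ht
  have htle : 5 ≤ t := by
    have : 11 ≤ h y / h x := by rwa [le_div_iff₀ hxpos]
    rw [ht]; linarith
  have hfl := Nat.floor_le (show 0 ≤ t by linarith)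
  have hfl2 := Nat.lt_floor_add_one t
  have hN5 : 5 ≤ ⌊t⌋₊ := Nat.le_floor (by exact_mod_cast htle)
  set N := ⌊t⌋₊
  have hty : h y = (2 * t + 1) * h x := by rw [ht]; field_simp; ring
  have hbig := big x (hsub x hx) y (hsub y hy) hne N hN5 (by rw [hty]; gcongr)
    (by rw [hty]; exact mul_lt_mul_of_pos_right (by linarith) hxpos)
  have hyup : h y ≤ (2 * N + 3) * h x := by
    rw [hty]; exact mul_le_mul_of_nonneg_right (by linarith) hxpos.le
  have hN5' : (5 : ℝ) ≤ N := by exact_mod_cast hN5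
  have hda : a + 0.7 * d ≤ 0.001 * h x := by rw [ehx]; linarith
  have hd2 : 0.7 * d ≤ 0.0001 * h x := by rw [ehx]; linarith
  have e1 : (2 * (N : ℝ) + 1) * (2.999 * h x) ≤ (2 * N + 1) * (3 * h x - a - 0.7 * d) := by
    gcongr; linarith
  have e2 : (4 * (N : ℝ) + 3) * (0.7 * d) ≤ (4 * N + 3) * (0.0001 * h x) := by gcongr
  have e3 : 5 * h x ≤ N * h x := by gcongr
  nlinarith

/-- Rounded weight vectors. -/
theorem rounding (V : Type*) [Fintype V] (hV : 0 < Fintype.card V) :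
    ∃ Γ : Finset (V → ℕ), (12 : ℝ) ^ Fintype.card V * Γ.card * 24 ≤ 2 * 2401 ^ Fintype.card V ∧
      ∀ ρ : V → ℝ, (∀ v, 0 ≤ ρ v) → ∃ γ ∈ Γ, 19 * Fintype.card V ≤ ∑ v, γ v ∧
        ∀ v, (γ v : ℝ) * ∑ w, ρ w ≤ 20 * Fintype.card V * ρ v := by
  set s := Fintype.card V with hs
  by_cases h1 : s = 1
  · refine ⟨{fun _ => 20}, by rw [h1]; norm_num, ?_⟩
    intro ρ hρ
    refine ⟨_, Finset.mem_singleton_self _, ?_, ?_⟩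
    · rw [Finset.sum_const, Finset.card_univ, ← hs]; simp; omega
    · intro v
      have : Subsingleton V := Fintype.card_le_one_iff_subsingleton.1 (by omega)
      rw [Fintype.sum_subsingleton _ v, h1]
      push_cast; linarith
  · have hs2 : 2 ≤ s := by omega
    refine ⟨(Fintype.piFinset (fun _ : V => Finset.range (20 * s + 1))).filter
      (fun γ => ∑ v, γ v ≤ 20 * s), ?_, ?_⟩
    · set Γ := (Fintype.piFinset (fun _ : V => Finset.range (20 * s + 1))).filter
        (fun γ => ∑ v, γ v ≤ 20 * s)
      have hq : (Γ.card : ℝ) * (19 / 20 : ℝ) ^ (20 * s) ≤ 20 ^ s := by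
        calc (Γ.card : ℝ) * (19 / 20 : ℝ) ^ (20 * s) = ∑ γ ∈ Γ, (19 / 20 : ℝ) ^ (20 * s) := by
              rw [Finset.sum_const, nsmul_eq_mul]
          _ ≤ ∑ γ ∈ Γ, ∏ v, (19 / 20 : ℝ) ^ (γ v) := by
              apply Finset.sum_le_sum
              intro γ hγ
              rw [Finset.prod_pow_eq_pow_sum]
              exact pow_le_pow_of_le_one (by norm_num) (by norm_num) (Finset.mem_filter.1 hγ).2
          _ ≤ ∑ γ ∈ Fintype.piFinset (fun _ : V => Finset.range (20 * s + 1)),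
                ∏ v, (19 / 20 : ℝ) ^ (γ v) := by
              apply Finset.sum_le_sum_of_subset_of_nonneg (Finset.filter_subset _ _)
              intros; positivity
          _ = ∏ _v : V, ∑ k ∈ Finset.range (20 * s + 1), (19 / 20 : ℝ) ^ k := by
              rw [Finset.prod_univ_sum]
          _ ≤ ∏ _v : V, (20 : ℝ) := by
              apply Finset.prod_le_prod
              · intros; positivity
              · intro v _
                rw [geom_sum_eq (by norm_num)]
                have : (0 : ℝ) < (19 / 20) ^ (20 * s + 1) := by positivity
                rw [div_le_iff_of_neg (by norm_num)]
                linarith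
          _ = 20 ^ s := by rw [Finset.prod_const, Finset.card_univ]
      rw [pow_mul] at hq
      have hq1 : (0.358 : ℝ) ≤ (19 / 20) ^ 20 := by norm_num
      have hq2 : (Γ.card : ℝ) * (0.358 : ℝ) ^ s ≤ 20 ^ s := by
        refine le_trans ?_ hq
        gcongr
      have hq3 : (12 : ℝ) ^ s * Γ.card * 0.358 ^ s ≤ 240 ^ s := by
        calc _ = 12 ^ s * ((Γ.card : ℝ) * (0.358 : ℝ) ^ s) := by ring
          _ ≤ 12 ^ s * 20 ^ s := by gcongr
          _ = 240 ^ s := by rw [← mul_pow]; norm_num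
      have hq4 : (12 : ℝ) * 240 ^ s ≤ (2401 * 0.358) ^ s := by
        obtain ⟨k, hk⟩ := Nat.exists_eq_add_of_le hs2
        rw [hk, pow_add, pow_add]
        have : (240 : ℝ) ^ k ≤ (2401 * 0.358) ^ k := by gcongr; norm_num
        nlinarith [show (0 : ℝ) < 240 ^ k by positivity]
      rw [mul_pow] at hq4
      have hp : (0 : ℝ) < 0.358 ^ s := by positivity
      refine le_of_mul_le_mul_right ?_ hp
      nlinarith
    · intro ρ hρ
      set X := ∑ w, ρ w with hX
      have hX0 : 0 ≤ X := Finset.sum_nonneg (fun v _ => hρ v)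
      rcases hX0.eq_or_lt with h0 | hpos
      · refine ⟨fun _ => 20, ?_, ?_, ?_⟩
        · simp [← hs]
          constructor
          · omega
          · omega
        · simp [← hs]; omega
        · intro v
          rw [← h0]
          have := hρ v
          simp; positivity
      · have hle : ∀ v, (⌊20 * s * ρ v / X⌋₊ : ℝ) ≤ 20 * s * ρ v / X := fun v =>
          Nat.floor_le (by have := hρ v; positivity)
        have hsumid : ∑ v, 20 * s * ρ v / X = 20 * s := by
          rw [← Finset.sum_div, ← Finset.mul_sum, ← hX]; field_simp
        have hsumle : ∑ v, ⌊20 * s * ρ v / X⌋₊ ≤ 20 * s := by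
          have : (∑ v, (⌊20 * s * ρ v / X⌋₊ : ℝ)) ≤ 20 * s := by
            exact (Finset.sum_le_sum (fun v _ => hle v)).trans hsumid.le
          exact_mod_cast this
        refine ⟨fun v => ⌊20 * s * ρ v / X⌋₊, ?_, ?_, ?_⟩
        · refine Finset.mem_filter.2 ⟨?_, hsumle⟩
          rw [Fintype.mem_piFinset]
          intro v
          rw [Finset.mem_range]
          have := Finset.single_le_sum (f := fun v => ⌊20 * s * ρ v / X⌋₊)
            (fun _ _ => Nat.zero_le _) (Finset.mem_univ v)
          exact Nat.lt_succ_of_le (this.trans hsumle)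
        · have h3 : ∑ v, (20 * s * ρ v / X) ≤ ∑ v, ((⌊20 * s * ρ v / X⌋₊ : ℝ) + 1) :=
            Finset.sum_le_sum (fun v _ => (Nat.lt_floor_add_one _).le)
          rw [hsumid, Finset.sum_add_distrib, Finset.sum_const, Finset.card_univ, ← hs] at h3
          simp at h3
          have h4 : (20 * s : ℝ) ≤ ((∑ v, ⌊20 * s * ρ v / X⌋₊ : ℕ) : ℝ) + s := by
            push_cast; exact h3
          have h5 : 20 * s ≤ (∑ v, ⌊20 * s * ρ v / X⌋₊) + s := by exact_mod_cast h4
          show 19 * s ≤ ∑ v, ⌊20 * s * ρ v / X⌋₊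
          omega
        · intro v
          have := mul_le_mul_of_nonneg_right (hle v) hX0
          rwa [div_mul_cancel₀ _ hpos.ne'] at this

/-- The abstract counting lemma for large solutions. -/
theorem large_count {α V E : Type*} [Fintype V] [Fintype E] (hV : 0 < Fintype.card V)
    (hE : Fintype.card E = 12) (Z : Finset α) (h : α → ℝ) (ρ : α → V → ℝ) (e : α → V → E)
    (a d : ℝ) (hd : 0 < d) (ha : 0 ≤ a) (ha3 : ∀ z ∈ Z, a ≤ 3 * h z)
    (h133 : ∀ z ∈ Z, 1.33 * d ≤ h z)
    (hρ : ∀ z ∈ Z, ∀ v, 0 ≤ ρ z v)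
    (hX : ∀ z ∈ Z, 3 * h z - a - d * Real.log 2 ≤ ∑ v, ρ z v)
    (h0 : ∀ z ∈ Z, ∀ z' ∈ Z, z ≠ z' → e z = e z' →
      ∑ v, min (ρ z v) (ρ z' v) ≤ h z + h z' - a + d * Real.log 2 / 2)
    (hN : ∀ z ∈ Z, ∀ z' ∈ Z, z ≠ z' → e z = e z' → ∀ N : ℕ,
      ∑ v, min ((2 * N + 1) * ρ z v) (ρ z' v) ≤
        (3 * N + 2) * h z + h z' - a + d * (4 * N + 3) * Real.log 2) :
    (Z.card : ℝ) ≤ 2 * 2401 ^ Fintype.card V := by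
  obtain ⟨Γ, hΓ, hround⟩ := rounding V hV
  have hγex : ∀ z, ∃ γ ∈ Γ, z ∈ Z → (19 * Fintype.card V ≤ ∑ v, γ v ∧
        ∀ v, (γ v : ℝ) * ∑ w, ρ z w ≤ 20 * Fintype.card V * ρ z v) := by
    intro z
    by_cases hz : z ∈ Z
    · obtain ⟨γ, h1, h2⟩ := hround (ρ z) (hρ z hz)
      exact ⟨γ, h1, fun _ => h2⟩
    · obtain ⟨γ, h1, h2⟩ := hround (fun _ => 0) (fun _ => le_rfl)
      exact ⟨γ, h1, fun h => absurd h hz⟩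
  choose γ hγmem hγ using hγex
  have hlog : Real.log 2 ≤ 0.69315 := by have := Real.log_two_lt_d9; linarith
  have hlog0 : 0 < Real.log 2 := Real.log_pos (by norm_num)
  have hs : (0 : ℝ) < Fintype.card V := by exact_mod_cast hV
  -- lower bound for sums of minima
  have hmin : ∀ z ∈ Z, ∀ z' ∈ Z, γ z = γ z' → ∀ c : ℝ, 0 ≤ c → ∀ M : ℝ, 0 ≤ M →
      M ≤ c * ∑ v, ρ z v → M ≤ ∑ v, ρ z' v →
      0.95 * M ≤ ∑ v, min (c * ρ z v) (ρ z' v) := by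
    intro z hz z' hz' hgg c hc M hM hM1 hM2
    have hterm : ∀ v, (γ z v : ℝ) * M ≤ 20 * Fintype.card V * min (c * ρ z v) (ρ z' v) := by
      intro v
      have e1 := (hγ z hz).2 v
      have e2 := (hγ z' hz').2 v
      rw [← hgg] at e2
      rw [mul_min_of_nonneg _ _ (by positivity)]
      apply le_min
      · calc (γ z v : ℝ) * M ≤ γ z v * (c * ∑ v, ρ z v) := by gcongr
          _ = c * (γ z v * ∑ v, ρ z v) := by ring
          _ ≤ c * (20 * Fintype.card V * ρ z v) := by gcongr
          _ = _ := by ring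
      · calc (γ z v : ℝ) * M ≤ γ z v * (∑ v, ρ z' v) := by gcongr
          _ ≤ _ := e2
    have hsum := Finset.sum_le_sum (fun v (_ : v ∈ Finset.univ) => hterm v)
    rw [← Finset.sum_mul, ← Finset.mul_sum] at hsum
    have h19 : (19 * Fintype.card V : ℝ) ≤ ∑ v, (γ z v : ℝ) := by
      exact_mod_cast (hγ z hz).1
    have : 19 * (Fintype.card V : ℝ) * M ≤
        20 * Fintype.card V * ∑ v, min (c * ρ z v) (ρ z' v) :=
      (mul_le_mul_of_nonneg_right h19 hM).trans hsum
    have h5 : (Fintype.card V : ℝ) * (19 * M) ≤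
        Fintype.card V * (20 * ∑ v, min (c * ρ z v) (ρ z' v)) := by linarith
    have := le_of_mul_le_mul_left h5 hs
    linarith
  have hcard : Z.card ≤ 24 * ((Finset.univ : Finset (V → E)) ×ˢ Γ).card := by
    apply Finset.card_le_mul_card_image_of_maps_to (f := fun z => (e z, γ z))
    · intro z hz
      exact Finset.mem_product.2 ⟨Finset.mem_univ _, hγmem z⟩
    · rintro ⟨e', γ'⟩ -
      set Y := Z.filter (fun z => (e z, γ z) = (e', γ')) with hY
      have hYm : ∀ z ∈ Y, z ∈ Z ∧ e z = e' ∧ γ z = γ' := by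
        intro z hz
        simpa [hY] using hz
      apply gap_fiber Y h a d hd (fun z hz => ha3 z (hYm z hz).1) (fun z hz => h133 z (hYm z hz).1)
      · intro z hz z' hz' hne hle
        obtain ⟨hz1, hz2, hz3⟩ := hYm z hz
        obtain ⟨hz1', hz2', hz3'⟩ := hYm z' hz'
        have k0 := h0 z hz1 z' hz1' hne (hz2.trans hz2'.symm)
        have x1 := hX z hz1
        have x2 := hX z' hz1'
        by_cases hM : 0 ≤ 3 * h z - a - d * Real.log 2
        · have k1 := hmin z hz1 z' hz1' (hz3.trans hz3'.symm) 1 zero_le_one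
            (3 * h z - a - d * Real.log 2) hM (by linarith) (by linarith)
          simp only [one_mul] at k1
          nlinarith
        · push Not at hM
          have e1 : 0 ≤ ∑ v, min (ρ z v) (ρ z' v) :=
            Finset.sum_nonneg (fun v _ => le_min (hρ z hz1 v) (hρ z' hz1' v))
          nlinarith
      · intro z hz z' hz' hne N hN5 hle hlt
        obtain ⟨hz1, hz2, hz3⟩ := hYm z hz
        obtain ⟨hz1', hz2', hz3'⟩ := hYm z' hz'
        have k0 := hN z hz1 z' hz1' hne (hz2.trans hz2'.symm) N
        have x1 := hX z hz1
        have x2 := hX z' hz1'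
        have hdl : d * Real.log 2 ≤ 0.7 * d := by nlinarith
        have hh : 0 ≤ h z := by have := h133 z hz1; nlinarith
        have hrhs : d * (4 * N + 3) * Real.log 2 ≤ 0.7 * (4 * N + 3) * d := by
          calc d * (4 * N + 3) * Real.log 2 = (4 * N + 3) * (d * Real.log 2) := by ring
            _ ≤ (4 * N + 3) * (0.7 * d) := by gcongr
            _ = _ := by ring
        by_cases hM : 0 ≤ 3 * h z - a - 0.7 * d
        · have k1 := hmin z hz1 z' hz1' (hz3.trans hz3'.symm) (2 * N + 1) (by positivity)
            ((2 * N + 1) * (3 * h z - a - 0.7 * d)) (by positivity)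
            (by gcongr; linarith)
            (by
              have : 0 ≤ (N : ℝ) * (a + 0.7 * d) := by positivity
              nlinarith)
          linarith
        · push Not at hM
          have : (2 * (N : ℝ) + 1) * (3 * h z - a - 0.7 * d) ≤ 0 :=
            mul_nonpos_of_nonneg_of_nonpos (by positivity) hM.le
          have h2 : 0 ≤ (3 * (N : ℝ) + 2) * h z := by positivity
          have h3 : 0 ≤ h z' := by have := h133 z' hz1'; nlinarith
          have h4 : 0 ≤ 0.7 * (4 * (N : ℝ) + 3) * d := by positivity
          linarith
  rw [Finset.card_product, Finset.card_univ, Fintype.card_fun, hE] at hcard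
  have : (Z.card : ℝ) ≤ 24 * (12 ^ Fintype.card V * Γ.card) := by exact_mod_cast hcard
  linarith

theorem global_bound {K : Type*} [Field K] [CharZero K] {Vi Vf W O : Type*} [Fintype Vi]
    [Fintype Vf] [Fintype W] [Nonempty Vi]
    (φ : Vi → K →+* ℂ) (fi : Vi → AbsoluteValue K ℝ) (hφ : ∀ w x, fi w x = ‖φ w x‖)
    (n : Vi → ℝ) (hn : ∀ w, 0 < n w)
    (ff : Vf → AbsoluteValue K ℝ) (hff : ∀ v, IsNonarchimedean (ff v))
    (g : W → AbsoluteValue K ℝ) (hg : ∀ v, IsNonarchimedean (g v))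
    (o : O → AbsoluteValue K ℝ) (ho : ∀ v, IsNonarchimedean (o v))
    (Z : Finset K) (hZ : ∀ u ∈ Z, u ≠ 0 ∧ u ≠ 1)
    (hgZ : ∀ u ∈ Z, ∀ y ∈ Z, ∀ w, g w u = g w y ∧ g w (1 - u) = g w (1 - y))
    (hoZ : ∀ u ∈ Z, ∀ q, o q u = 1 ∧ o q (1 - u) = 1)
    (hP : ∀ x : K, x ≠ 0 → (∀ q, o q x ≤ 1) →
      0 ≤ (∑ w, n w * Real.log (fi w x) + ∑ v, Real.log (ff v x)) + ∑ w, Real.log (g w x)) :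
    (Z.card : ℝ) ≤ 3 * 2401 ^ (Fintype.card Vi + Fintype.card Vf) := by
  rcases Z.eq_empty_or_nonempty with rfl | ⟨u0, hu0Z⟩
  · simp
  -- combine the places of S
  set f : Vi ⊕ Vf → AbsoluteValue K ℝ := Sum.elim fi ff with hf
  set m : Vi ⊕ Vf → ℝ := Sum.elim n (fun _ => 1) with hm
  set l : Vi ⊕ Vf → ℝ := Sum.elim (fun _ => Real.log 2) (fun _ => 0) with hl
  set d : ℝ := ∑ w, n w with hd
  have hdpos : 0 < d := Finset.sum_pos (fun w _ => hn w) Finset.univ_nonempty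
  have hm0 : ∀ v, 0 ≤ m v := by rintro (w | v) <;> simp [hm, (hn _).le]
  have hml : ∑ v, m v * l v = d * Real.log 2 := by
    simp [hm, hl, Fintype.sum_sum_type, hd, Finset.sum_mul]
  have hhl : ∀ v, ∀ a b : K, f v (a - b) ≤ Real.exp (l v) * max (f v a) (f v b) := by
    rintro (w | v) a b
    · exact arch_hl (fi w) a b
    · exact na_hl (ff v) (hff v) a b
  have hP' : ∀ x : K, x ≠ 0 → (∀ q, o q x ≤ 1) →
      0 ≤ ∑ v, m v * Real.log (f v x) + ∑ w, Real.log (g w x) := by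
    intro x hx h
    have := hP x hx h
    simpa [hm, hf, Fintype.sum_sum_type] using this
  have hPeq : ∀ x : K, x ≠ 0 → (∀ q, o q x = 1) →
      ∑ v, m v * Real.log (f v x) + ∑ w, Real.log (g w x) = 0 := by
    intro x hx h
    apply le_antisymm
    · have := hP' x⁻¹ (inv_ne_zero hx) (fun q => by rw [map_inv₀, h q, inv_one])
      simp only [map_inv₀, Real.log_inv, mul_neg, Finset.sum_neg_distrib] at this
      linarith
    · exact hP' x hx (fun q => (h q).le)
  set h : K → ℝ := fun u => ∑ v, m v * Real.log (mx (f v) u) + ∑ w, Real.log (mx (g w) u) with hh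
  set a : ℝ := ∑ w, (3 * Real.log (mx (g w) u0) - Real.log (g w u0) - Real.log (g w (1 - u0)))
    with ha
  have hmxc : ∀ u ∈ Z, ∀ y ∈ Z, ∀ w, mx (g w) u = mx (g w) y := by
    intro u hu y hy w
    rw [mx, mx, (hgZ u hu y hy w).1, (hgZ u hu y hy w).2]
  have ha' : ∀ u ∈ Z, a =
      ∑ w, (3 * Real.log (mx (g w) u) - Real.log (g w u) - Real.log (g w (1 - u))) := by
    intro u hu
    rw [ha]
    refine Finset.sum_congr rfl (fun w _ => ?_)
    rw [hmxc u0 hu0Z u hu w, (hgZ u0 hu0Z u hu w).1, (hgZ u0 hu0Z u hu w).2]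
  have ha0 : 0 ≤ a := by
    rw [ha]
    refine Finset.sum_nonneg (fun w _ => ?_)
    rw [← rr_sum']
    exact Finset.sum_nonneg (fun i _ => rr_nonneg (g w) (hZ u0 hu0Z).1 (hZ u0 hu0Z).2 i)
  -- (1)
  have F1 : ∀ u ∈ Z, ∑ v, m v * ∑ i, rr (f v) u i = 3 * h u - a := by
    intro u hu
    have p1 := hPeq u (hZ u hu).1 (fun q => (hoZ u hu q).1)
    have p2 := hPeq (1 - u) (sub_ne_zero.2 (Ne.symm (hZ u hu).2)) (fun q => (hoZ u hu q).2)
    rw [ha' u hu, hh]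
    simp only [rr_sum', mul_sub, Finset.sum_sub_distrib, mul_add, Finset.mul_sum,
      mul_left_comm (3 : ℝ)] at p1 p2 ⊢
    linarith
  have hX0 : ∀ u ∈ Z, 0 ≤ ∑ v, m v * ∑ i, rr (f v) u i := by
    intro u hu
    exact Finset.sum_nonneg (fun v _ => mul_nonneg (hm0 v)
      (Finset.sum_nonneg (fun i _ => rr_nonneg (f v) (hZ u hu).1 (hZ u hu).2 i)))
  -- (2), general
  have Fgen : ∀ u ∈ Z, ∀ y ∈ Z, ∀ c : ℝ, ∀ D : K, D ≠ 0 → (∀ q, o q D ≤ 1) →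
      (∀ w, Real.log (g w D) ≤ (c - 2) * Real.log (mx (g w) u)
        + Real.log (g w u) + Real.log (g w (1 - u))) →
      ∑ v, m v * (c * Real.log (mx (f v) u) + Real.log (mx (f v) y) - Real.log (f v D)) ≤
        c * h u + h y - a := by
    intro u hu y hy c D hD hoD hgD
    have p := hP' D hD hoD
    have s1 := Finset.sum_le_sum (fun w (_ : w ∈ Finset.univ) => hgD w)
    rw [ha' u hu, hh]
    have s2 : ∑ w, Real.log (mx (g w) y) = ∑ w, Real.log (mx (g w) u) :=
      Finset.sum_congr rfl (fun w _ => by rw [hmxc u hu y hy w])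
    simp only [s2, mul_sub, Finset.sum_sub_distrib, mul_add, Finset.mul_sum, sub_mul,
      Finset.sum_add_distrib, mul_left_comm c] at s1 ⊢
    simp only [← Finset.mul_sum] at s1 ⊢
    linarith
  have F2 : ∀ u ∈ Z, ∀ y ∈ Z, u ≠ y →
      ∑ v, m v * (Real.log (mx (f v) u) + Real.log (mx (f v) y) - Real.log (f v (u - y))) ≤
        h u + h y - a := by
    intro u hu y hy huy
    have := Fgen u hu y hy 1 (u - y) (sub_ne_zero.2 huy) ?_ ?_
    · simpa only [one_mul] using this
    · intro q
      refine (na_sub (ho q) u y).trans ?_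
      rw [(hoZ u hu q).1, (hoZ y hy q).1, max_self]
    · intro w
      have e := extra_sub (g w) (hg w) (hgZ u hu y hy w).1 (hgZ u hu y hy w).2
      have pu := (g w).pos (hZ u hu).1
      have p1u := (g w).pos (sub_ne_zero.2 (Ne.symm (hZ u hu).2))
      have pm := mx_pos (g w) u
      have pd := (g w).pos (sub_ne_zero.2 huy)
      have e2 := Real.log_le_log (by positivity) e
      rw [Real.log_mul pd.ne' pm.ne', Real.log_mul pu.ne' p1u.ne'] at e2
      linarith
  have F3 : ∀ u ∈ Z, ∀ y ∈ Z, ∀ N : ℕ, ∀ U : Fin 3 → K, U 0 + U 1 = U 2 →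
      y * U 1 - (1 - y) * U 0 ≠ 0 →
      (∀ f : AbsoluteValue K ℝ, IsNonarchimedean f → ∀ i,
        f (U i) ≤ f (cx u i) ^ (2 * N + 1) * mx f u ^ (N + 1)) →
      ∑ v, m v * ((3 * N + 2) * Real.log (mx (f v) u) + Real.log (mx (f v) y)
        - Real.log (f v (y * U 1 - (1 - y) * U 0))) ≤ (3 * N + 2) * h u + h y - a := by
    intro u hu y hy N U hU hD hb
    apply Fgen u hu y hy _ _ hD
    · intro q
      obtain ⟨q1, q2⟩ := hoZ u hu q
      obtain ⟨q3, q4⟩ := hoZ y hy q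
      have e := extra_pade (o q) (ho q) (q1.trans q3.symm) (q2.trans q4.symm) N U hU
        (hb (o q) (ho q))
      have : mx (o q) u = 1 := by rw [mx, q1, q2, max_self, max_self]
      rw [q1, q2, this, one_pow, one_mul, one_mul] at e
      exact e
    · intro w
      have e := extra_pade (g w) (hg w) (hgZ u hu y hy w).1 (hgZ u hu y hy w).2 N U hU
        (hb (g w) (hg w))
      have pu := (g w).pos (hZ u hu).1
      have p1u := (g w).pos (sub_ne_zero.2 (Ne.symm (hZ u hu).2))
      have pm := mx_pos (g w) u
      have pd := (g w).pos hD
      have e2 := Real.log_le_log pd e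
      rw [Real.log_mul (by positivity) (by positivity), Real.log_mul pu.ne' p1u.ne',
        Real.log_pow] at e2
      push_cast at e2
      linarith
  -- classes
  set ρ : K → Vi ⊕ Vf → ℝ := fun u v => m v * rr (f v) u (srt (f v) u 0) with hρ
  set e : K → Vi ⊕ Vf → Equiv.Perm (Fin 3) × Bool := fun u v =>
    (srt (f v) u, Sum.elim (fun w => decide (0 ≤ (zz (φ w) (fi w) u).im)) (fun _ => true) v) with he
  have hρ0 : ∀ z ∈ Z, ∀ v, 0 ≤ ρ z v := fun z hz v =>
    mul_nonneg (hm0 v) (rr_nonneg (f v) (hZ z hz).1 (hZ z hz).2 _)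
  have hVpos : 0 < Fintype.card (Vi ⊕ Vf) := by
    rw [Fintype.card_sum]
    have : 0 < Fintype.card Vi := Fintype.card_pos
    omega
  have hlarge : ((Z.filter (fun z => 1.33 * d ≤ h z)).card : ℝ) ≤
      2 * 2401 ^ Fintype.card (Vi ⊕ Vf) := by
    have hsub : ∀ z ∈ Z.filter (fun z => 1.33 * d ≤ h z), z ∈ Z :=
      fun z hz => (Finset.mem_filter.1 hz).1
    apply large_count hVpos (E := Equiv.Perm (Fin 3) × Bool) ?_ _ h ρ e a d hdpos ha0
    · intro z hz
      have := F1 z (hsub z hz)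
      have := hX0 z (hsub z hz)
      linarith
    · exact fun z hz => (Finset.mem_filter.1 hz).2
    · exact fun z hz => hρ0 z (hsub z hz)
    · intro z hz
      have hz' := hsub z hz
      rw [← F1 z hz', ← hml, ← Finset.sum_sub_distrib]
      refine Finset.sum_le_sum (fun v _ => ?_)
      have := rr_mid (f v) (l v) (hhl v) (hZ z hz').1 (hZ z hz').2
      rw [hρ, rr_sum]
      have := mul_le_mul_of_nonneg_left this (hm0 v)
      simp only
      linarith
    · intro z hz z' hz' hne hee
      have hz := hsub z hz
      have hz' := hsub z' hz'
      refine le_trans ?_ (add_le_add_left (F2 z hz z' hz' hne) _)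
      have : d * Real.log 2 / 2 = ∑ v, m v * l v / 2 := by rw [← hml, Finset.sum_div]
      rw [this, ← Finset.sum_add_distrib]
      refine Finset.sum_le_sum (fun v _ => ?_)
      have hev := congrFun hee v
      simp only [he, Prod.mk.injEq] at hev
      have key : min (rr (f v) z (srt (f v) z 0)) (rr (f v) z' (srt (f v) z' 0)) - l v / 2 ≤
          Real.log (mx (f v) z) + Real.log (mx (f v) z') - Real.log (f v (z - z')) := by
        rcases v with w | v
        · refine arch_quadrant (φ w) (fi w) (hφ w) (hZ z hz).1 (hZ z hz).2 (hZ z' hz').1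
            (hZ z' hz').2 hne hev.1 ?_
          simpa using hev.2
        · have := gen_sub (ff v) 0 (na_hl (ff v) (hff v)) (hZ z hz).1 (hZ z hz).2 (hZ z' hz').1
            (hZ z' hz').2 hne hev.1
          simpa [hl, hf] using this
      have := mul_le_mul_of_nonneg_left key (hm0 v)
      rw [hρ]
      simp only
      rw [← mul_min_of_nonneg _ _ (hm0 v)]
      linarith
    · intro z hz z' hz' hne hee N
      have hz := hsub z hz
      have hz' := hsub z' hz'
      obtain ⟨U, hU, hD, hb1, hb2⟩ := pade_main N z z' (hZ z hz).1 (hZ z hz).2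
      refine le_trans ?_ (add_le_add_left (F3 z hz z' hz' N U hU hD hb2) _)
      have : d * (4 * N + 3) * Real.log 2 = ∑ v, (4 * N + 3) * (m v * l v) := by
        rw [← Finset.mul_sum, hml]; ring
      rw [this, ← Finset.sum_add_distrib]
      refine Finset.sum_le_sum (fun v _ => ?_)
      have hev := congrFun hee v
      simp only [he, Prod.mk.injEq] at hev
      have hbv : ∀ i, f v (U i) ≤ Real.exp ((4 * N + 2) * l v) * f v (cx z i) ^ (2 * N + 1) *
          mx (f v) z ^ (N + 1) := by
        intro i
        rcases v with w | v
        · have := hb1 (fi w) i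
          have e2 : Real.exp ((4 * N + 2) * l (Sum.inl w)) = 2 ^ (4 * N + 2) := by
            simp only [hl, Sum.elim_inl]
            rw [mul_comm, Real.exp_mul, Real.exp_log (by norm_num)]
            exact_mod_cast Real.rpow_natCast 2 (4 * N + 2)
          rw [e2]
          exact this
        · have := hb2 (ff v) (hff v) i
          simpa [hl, hf] using this
      have key := pade_local (f v) (l v) (hhl v) (hZ z hz).1 (hZ z hz).2 (hZ z' hz').1
            (hZ z' hz').2 N U hU hD hbv (srt (f v) z 0)
      have := mul_le_mul_of_nonneg_left key (hm0 v)
      rw [hρ]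
      simp only
      rw [← hev.1, mul_left_comm, ← mul_min_of_nonneg _ _ (hm0 v)]
      linarith
    · simp [Fintype.card_perm]; rfl
  -- small solutions
  have hsmall : (Z.filter (fun z => ¬ 1.33 * d ≤ h z)).card ≤ 2310 ^ Fintype.card Vi := by
    have : (Z.filter (fun z => ¬ 1.33 * d ≤ h z)).card ≤
        (Fintype.piFinset (fun _ : Vi => (Finset.univ : Finset (Equiv.Perm (Fin 3))) ×ˢ
          Finset.range 11 ×ˢ Finset.range 35)).card := by
      apply Finset.card_le_card_of_injOn (fun u w => cell (φ w) (fi w) u)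
      · intro u hu
        have hu := (Finset.mem_filter.1 (Finset.mem_coe.1 hu)).1
        rw [Finset.mem_coe, Fintype.mem_piFinset]
        intro w
        exact cell_mem (φ w) (fi w) (hφ w) (hZ u hu).1 (hZ u hu).2
      · intro u hu y hy huy
        obtain ⟨hu, hu'⟩ := (Finset.mem_filter.1 (Finset.mem_coe.1 hu))
        obtain ⟨hy, hy'⟩ := (Finset.mem_filter.1 (Finset.mem_coe.1 hy))
        by_contra hne
        have k := F2 u hu y hy hne
        have k2 : ∑ v, m v * (l v * (Real.log 14.4 / Real.log 2)) ≤
            ∑ v, m v * (Real.log (mx (f v) u) + Real.log (mx (f v) y)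
              - Real.log (f v (u - y))) := by
          refine Finset.sum_le_sum (fun v _ => mul_le_mul_of_nonneg_left ?_ (hm0 v))
          rcases v with w | v
          · have := cell_close (φ w) (fi w) (hφ w) (hZ u hu).1 (hZ u hu).2 (hZ y hy).1
              (hZ y hy).2 hne (congrFun huy w)
            have l2 : Real.log 2 ≠ 0 := (Real.log_pos (by norm_num)).ne'
            simp only [hl, Sum.elim_inl]
            rw [mul_div_cancel₀ _ l2]
            exact this
          · have := na_sub_mx (ff v) (hff v) hne
            simpa [hl, hf] using this
        simp only [← mul_assoc] at k2
        rw [← Finset.sum_mul, hml] at k2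
        have l2 : Real.log 2 ≠ 0 := (Real.log_pos (by norm_num)).ne'
        rw [mul_assoc, mul_div_cancel₀ _ l2] at k2
        have := log_num
        push Not at hu' hy'
        nlinarith
    refine this.trans (le_of_eq ?_)
    have hc : ((Finset.univ : Finset (Equiv.Perm (Fin 3))) ×ˢ
          Finset.range 11 ×ˢ Finset.range 35).card = 2310 := by
      rw [Finset.card_product, Finset.card_product, Finset.card_univ, Fintype.card_perm,
        Fintype.card_fin, Finset.card_range, Finset.card_range]
      rfl
    rw [Fintype.card_piFinset, Finset.prod_const, hc, Finset.card_univ]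
  have hsmall' : ((Z.filter (fun z => ¬ 1.33 * d ≤ h z)).card : ℝ) ≤
      2401 ^ Fintype.card (Vi ⊕ Vf) := by
    have h1 : ((Z.filter (fun z => ¬ 1.33 * d ≤ h z)).card : ℝ) ≤ 2310 ^ Fintype.card Vi := by
      exact_mod_cast hsmall
    refine h1.trans ?_
    calc (2310 : ℝ) ^ Fintype.card Vi ≤ 2401 ^ Fintype.card Vi := by gcongr; norm_num
      _ ≤ _ := pow_le_pow_right₀ (by norm_num) (by rw [Fintype.card_sum]; omega)
  have hsplit := Finset.card_filter_add_card_filter_not (s := Z) (fun z => 1.33 * d ≤ h z)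
  have : (Z.card : ℝ) = (Z.filter (fun z => 1.33 * d ≤ h z)).card +
      (Z.filter (fun z => ¬ 1.33 * d ≤ h z)).card := by exact_mod_cast hsplit.symm
  rw [this, ← Fintype.card_sum]
  linarith

section partF

open NumberField.RingOfIntegers

/-- There is always a prime outside a given finite set. -/
theorem exists_prime_notMem {K : Type*} [Field K] [NumberField K]
    (T : Finset (HeightOneSpectrum (𝓞 K))) : ∃ v : HeightOneSpectrum (𝓞 K), v ∉ T := by
  set N : ℕ := ∏ v ∈ T, Ideal.absNorm v.asIdeal with hN
  have hN0 : N ≠ 0 := by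
    rw [hN, Finset.prod_ne_zero_iff]
    intro v _
    exact Ideal.absNorm_eq_zero_iff.not.mpr v.ne_bot
  have hmem : ∀ v ∈ T, ((N : ℕ) : 𝓞 K) ∈ v.asIdeal := by
    intro v hv
    obtain ⟨m, hm⟩ := Finset.dvd_prod_of_mem (fun v : HeightOneSpectrum (𝓞 K) =>
      Ideal.absNorm v.asIdeal) hv
    rw [hN, hm]
    push_cast
    exact Ideal.mul_mem_right _ _ (Ideal.absNorm_mem _)
  have hnu : ¬ IsUnit (((N + 1 : ℕ)) : 𝓞 K) := by
    intro h
    have h2 := h.map (Algebra.norm ℤ)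
    have h3 : Algebra.norm ℤ (((N + 1 : ℕ)) : 𝓞 K) = ((N + 1 : ℕ) : ℤ) ^ Module.finrank ℤ (𝓞 K) := by
      have := Algebra.norm_algebraMap (S := 𝓞 K) ((N + 1 : ℕ) : ℤ)
      simpa using this
    rw [h3] at h2
    have hf : Module.finrank ℤ (𝓞 K) ≠ 0 := by
      rw [NumberField.RingOfIntegers.rank]
      exact Module.finrank_pos.ne'
    rw [isUnit_pow_iff hf, Int.isUnit_iff] at h2
    omega
  obtain ⟨M, hM, hMem⟩ := exists_max_ideal_of_mem_nonunits hnu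
  have hMb : M ≠ ⊥ := by
    rintro rfl
    rw [Ideal.mem_bot] at hMem
    exact absurd hMem (by exact_mod_cast Nat.succ_ne_zero N)
  refine ⟨⟨M, hM.isPrime, hMb⟩, fun hv => ?_⟩
  have h1 := hmem _ hv
  apply hM.ne_top
  rw [Ideal.eq_top_iff_one]
  have := M.sub_mem hMem h1
  simpa using this

theorem adicAbv_finite {K : Type*} [Field K] [NumberField K] {x : K} (hx : x ≠ 0) :
    (Function.mulSupport fun v : HeightOneSpectrum (𝓞 K) =>
      NumberField.HeightOneSpectrum.adicAbv K v x).Finite := by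
  have h := FinitePlace.hasFiniteMulSupport hx
  have h2 : (Function.mulSupport ((fun w : FinitePlace K => w x) ∘
      (FinitePlace.equivHeightOneSpectrum (K := K)).symm)).Finite := by
    rw [Function.mulSupport_comp_eq_preimage]
    exact Set.Finite.preimage (Equiv.injective _).injOn h
  convert h2 using 2
  ext v
  simp only [Function.comp]
  rw [FinitePlace.equivHeightOneSpectrum_symm_apply, FinitePlace.norm_embedding]

theorem product_formula_bound {K : Type*} [Field K] [NumberField K]
    (F : Finset (HeightOneSpectrum (𝓞 K))) {x : K} (hx : x ≠ 0)
    (ho : ∀ v ∉ F, NumberField.HeightOneSpectrum.adicAbv K v x ≤ 1) :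
    0 ≤ ∑ w : InfinitePlace K, (w.mult : ℝ) * Real.log (w.1 x) +
      ∑ v ∈ F, Real.log (NumberField.HeightOneSpectrum.adicAbv K v x) := by
  set f : HeightOneSpectrum (𝓞 K) → ℝ := fun v => NumberField.HeightOneSpectrum.adicAbv K v x
    with hf
  have hfin := adicAbv_finite hx
  have hpf := NumberField.prod_abs_eq_one hx
  have h1 : ∏ᶠ w : FinitePlace K, w x = ∏ᶠ v, f v := by
    rw [← finprod_comp_equiv (FinitePlace.equivHeightOneSpectrum (K := K)).symm]
    apply finprod_congr
    intro v
    rw [FinitePlace.equivHeightOneSpectrum_symm_apply, FinitePlace.norm_embedding]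
  have h2 : ∏ᶠ v, f v = ∏ v ∈ F ∪ hfin.toFinset, f v := by
    apply finprod_eq_prod_of_mulSupport_subset
    intro v hv
    simp only [Finset.coe_union, Set.mem_union]
    right
    simpa using hv
  have hpos : ∀ v, 0 < f v := fun v => (NumberField.HeightOneSpectrum.adicAbv K v).pos hx
  have hposi : ∀ w : InfinitePlace K, 0 < w x := fun w => InfinitePlace.pos_iff.mpr hx
  rw [h1, h2] at hpf
  have h3 := congrArg Real.log hpf
  rw [Real.log_one, Real.log_mul (Finset.prod_ne_zero_iff.mpr fun w _ => (pow_pos (hposi w) _).ne')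
    (Finset.prod_ne_zero_iff.mpr fun v _ => (hpos v).ne'),
    Real.log_prod (fun w _ => (pow_pos (hposi w) _).ne'),
    Real.log_prod (fun v _ => (hpos v).ne')] at h3
  have h4 : ∑ v ∈ F ∪ hfin.toFinset, Real.log (f v) ≤ ∑ v ∈ F, Real.log (f v) := by
    rw [← Finset.sum_sdiff (Finset.subset_union_left : F ⊆ F ∪ hfin.toFinset)]
    have : ∑ v ∈ (F ∪ hfin.toFinset) \ F, Real.log (f v) ≤ 0 := by
      apply Finset.sum_nonpos
      intro v hv
      exact Real.log_nonpos (hpos v).le (ho v (Finset.mem_sdiff.mp hv).2)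
    linarith
  have h5 : ∑ w : InfinitePlace K, Real.log (w x ^ w.mult) =
      ∑ w : InfinitePlace K, (w.mult : ℝ) * Real.log (w.1 x) := by
    apply Finset.sum_congr rfl
    intro w _
    rw [Real.log_pow]
    rfl
  rw [h5] at h3
  linarith

theorem tset_bound {K : Type*} [Field K] [NumberField K]
    (T : Finset (HeightOneSpectrum (𝓞 K))) (Z : Finset K) (hZ : ∀ u ∈ Z, u ≠ 0 ∧ u ≠ 1)
    (hT : ∀ u ∈ Z, ∀ y ∈ Z, ∀ v ∉ T,
      NumberField.HeightOneSpectrum.adicAbv K v u = NumberField.HeightOneSpectrum.adicAbv K v y ∧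
      NumberField.HeightOneSpectrum.adicAbv K v (1 - u) =
        NumberField.HeightOneSpectrum.adicAbv K v (1 - y)) :
    Z.card ≤ 3 * 7 ^ (4 * sCard K T) := by
  rcases Z.eq_empty_or_nonempty with rfl | ⟨u0, hu0⟩
  · simp
  have hu1 : 1 - u0 ≠ 0 := sub_ne_zero.mpr (hZ u0 hu0).2.symm
  set F : Finset (HeightOneSpectrum (𝓞 K)) :=
    T ∪ ((adicAbv_finite (hZ u0 hu0).1).toFinset ∪ (adicAbv_finite hu1).toFinset) with hF
  have hFo : ∀ v ∉ F, v ∉ T ∧ NumberField.HeightOneSpectrum.adicAbv K v u0 = 1 ∧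
      NumberField.HeightOneSpectrum.adicAbv K v (1 - u0) = 1 := by
    intro v hv
    simpa [hF, not_or] using hv
  have hTF : T ⊆ F := Finset.subset_union_left
  have key := global_bound (K := K) (Vi := InfinitePlace K) (Vf := {v // v ∈ T})
    (W := {v // v ∈ F \ T}) (O := {v // v ∉ F})
    (fun w => w.embedding) (fun w => w.1) (fun w x => (w.norm_embedding_eq x).symm)
    (fun w => (w.mult : ℝ)) (fun w => by exact_mod_cast w.mult_pos)
    (fun v => NumberField.HeightOneSpectrum.adicAbv K v.1)
    (fun v => NumberField.HeightOneSpectrum.isNonarchimedean_adicAbv K v.1)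
    (fun v => NumberField.HeightOneSpectrum.adicAbv K v.1)
    (fun v => NumberField.HeightOneSpectrum.isNonarchimedean_adicAbv K v.1)
    (fun v => NumberField.HeightOneSpectrum.adicAbv K v.1)
    (fun v => NumberField.HeightOneSpectrum.isNonarchimedean_adicAbv K v.1)
    Z hZ
    (fun u hu y hy w => hT u hu y hy w.1 (Finset.mem_sdiff.mp w.2).2)
    (fun u hu q => by
      have h := hT u hu u0 hu0 q.1 (hFo q.1 q.2).1
      exact ⟨h.1.trans (hFo q.1 q.2).2.1, h.2.trans (hFo q.1 q.2).2.2⟩)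
    (fun x hx ho => by
      have h := product_formula_bound F hx (fun v hv => ho ⟨v, hv⟩)
      rw [← Finset.sum_sdiff hTF, ← Finset.sum_coe_sort T, ← Finset.sum_coe_sort (F \ T)] at h
      linarith)
  have h7 : (7 : ℕ) ^ (4 * sCard K T) = 2401 ^ (Fintype.card (InfinitePlace K) + T.card) := by
    rw [pow_mul, sCard, add_comm]
    norm_num
  rw [h7]
  rw [Fintype.card_coe] at key
  exact_mod_cast key

theorem ordAt_eq_iff {K : Type*} [Field K] [NumberField K] (v : HeightOneSpectrum (𝓞 K)) {x : K}
    (hx : x ≠ 0) : v.valuation K x = WithZero.exp (- ordAt v x) := by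
  rw [ordAt, dif_neg hx, neg_neg]
  exact (WithZero.coe_unzero ((v.valuation K).ne_zero_iff.mpr hx)).symm

theorem adicAbv_eq_of_valuation {K : Type*} [Field K] [NumberField K]
    (v : HeightOneSpectrum (𝓞 K)) {x y : K} (h : v.valuation K x = v.valuation K y) :
    NumberField.HeightOneSpectrum.adicAbv K v x = NumberField.HeightOneSpectrum.adicAbv K v y := by
  rw [NumberField.HeightOneSpectrum.adicAbv_def, NumberField.HeightOneSpectrum.adicAbv_def, h]

/-- The determinant pairing of two points of the projective line, on representatives. -/
noncomputable def detP {K : Type*} [Field K] (P Q : P1 K) : K := P.rep 0 * Q.rep 1 - P.rep 1 * Q.rep 0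

theorem eq_of_detP {K : Type*} [Field K] {P Q : P1 K} (h : detP P Q = 0) : P = Q := by
  have hp := P.rep_nonzero
  have hq := Q.rep_nonzero
  unfold detP at h
  rw [← P.mk_rep, ← Q.mk_rep, Projectivization.mk_eq_mk_iff']
  by_cases hq0 : Q.rep 0 = 0
  · have hq1 : Q.rep 1 ≠ 0 := by
      intro h1
      apply hq
      ext i
      fin_cases i <;> simp [hq0, h1]
    refine ⟨P.rep 1 / Q.rep 1, ?_⟩
    have hp0 : P.rep 0 = 0 := by
      rw [hq0, mul_zero, sub_zero] at h
      exact (mul_eq_zero.mp h).resolve_right hq1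
    ext i
    fin_cases i
    · simp [hq0, hp0]
    · simp [hq1]
  · refine ⟨P.rep 0 / Q.rep 0, ?_⟩
    ext i
    fin_cases i
    · simp [hq0]
    · simp only [Pi.smul_apply, smul_eq_mul, Fin.mk_one]
      field_simp
      linear_combination h

theorem detP_valuation {K : Type*} [Field K] [NumberField K] (v : HeightOneSpectrum (𝓞 K))
    {A P : P1 K} (h : logDist v A P = 0) : detP A P ≠ 0 ∧
      v.valuation K (detP A P) =
        WithZero.exp (- minOrd v (A.rep 0) (A.rep 1)) * WithZero.exp (- minOrd v (P.rep 0) (P.rep 1)) := by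
  unfold logDist at h
  split_ifs at h with hAP
  · exact absurd h (by simp)
  have hd : detP A P ≠ 0 := fun h0 => hAP (eq_of_detP h0)
  refine ⟨hd, ?_⟩
  rw [ordAt_eq_iff v hd, ← WithZero.exp_add]
  congr 1
  have h' : ordAt v (detP A P) - minOrd v (A.rep 0) (A.rep 1) - minOrd v (P.rep 0) (P.rep 1) = 0 := by
    exact_mod_cast h
  linarith

theorem detP_rel {K : Type*} [Field K] (A B C P : P1 K) :
    detP B C * detP A P + detP C A * detP B P + detP A B * detP C P = 0 := by
  unfold detP
  ring

theorem finset_points_bound {K : Type*} [Field K] [NumberField K]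
    (T : Finset (HeightOneSpectrum (𝓞 K)))
    (A B C : P1 K) (hAB : A ≠ B) (hAC : A ≠ C) (hBC : B ≠ C) (X : Finset (P1 K))
    (hX : ∀ P ∈ X, ∀ v ∉ T,
        logDist v A P = 0 ∧ logDist v B P = 0 ∧ logDist v C P = 0) :
    X.card ≤ 3 * 7 ^ (4 * sCard K T) := by
  obtain ⟨v0, hv0⟩ := exists_prime_notMem T
  have hα : detP B C ≠ 0 := fun h => hBC (eq_of_detP h)
  have hβ : detP C A ≠ 0 := fun h => hAC (eq_of_detP h).symm
  have hγ : detP A B ≠ 0 := fun h => hAB (eq_of_detP h)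
  have hA : ∀ P ∈ X, detP A P ≠ 0 := fun P hP => (detP_valuation v0 (hX P hP v0 hv0).1).1
  have hB : ∀ P ∈ X, detP B P ≠ 0 := fun P hP => (detP_valuation v0 (hX P hP v0 hv0).2.1).1
  have hC : ∀ P ∈ X, detP C P ≠ 0 := fun P hP => (detP_valuation v0 (hX P hP v0 hv0).2.2).1
  set u : P1 K → K := fun P => -(detP B C * detP A P) / (detP A B * detP C P) with hu
  have h1u : ∀ P ∈ X, 1 - u P = -(detP C A * detP B P) / (detP A B * detP C P) := by
    intro P hP
    have := hC P hP
    rw [hu, eq_div_iff (mul_ne_zero hγ this)]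
    simp only [sub_mul]
    rw [div_mul_cancel₀ _ (mul_ne_zero hγ this)]
    linear_combination detP_rel A B C P
  have hinj : Set.InjOn u X := by
    intro P hP Q hQ h
    have h1 := hC P hP
    have h2 := hC Q hQ
    simp only [hu] at h
    rw [div_eq_div_iff (mul_ne_zero hγ h1) (mul_ne_zero hγ h2)] at h
    have h3 : detP B C * detP A B * (detP C A * detP P Q) = 0 := by
      have e : detP C A * detP P Q = detP C P * detP A Q - detP A P * detP C Q := by
        unfold detP
        ring
      rw [e]
      linear_combination h
    have h4 : detP P Q = 0 := by
      simpa [hα, hβ, hγ] using h3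
    exact eq_of_detP h4
  rw [← Finset.card_image_of_injOn hinj]
  apply tset_bound
  · intro x hx
    obtain ⟨P, hP, rfl⟩ := Finset.mem_image.mp hx
    constructor
    · exact div_ne_zero (neg_ne_zero.mpr (mul_ne_zero hα (hA P hP))) (mul_ne_zero hγ (hC P hP))
    · intro h
      have h2 := h1u P hP
      rw [h, sub_self] at h2
      exact div_ne_zero (neg_ne_zero.mpr (mul_ne_zero hβ (hB P hP))) (mul_ne_zero hγ (hC P hP))
        h2.symm
  · intro x hx y hy v hv
    obtain ⟨P, hP, rfl⟩ := Finset.mem_image.mp hx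
    obtain ⟨Q, hQ, rfl⟩ := Finset.mem_image.mp hy
    obtain ⟨pa, pb, pc⟩ := hX P hP v hv
    obtain ⟨qa, qb, qc⟩ := hX Q hQ v hv
    have aux : ∀ a s t c : WithZero (Multiplicative ℤ), ∀ p : WithZero (Multiplicative ℤ), p ≠ 0 →
        a * (s * p) / (c * (t * p)) = a * s / (c * t) := by
      intro a s t c p hp
      rw [← mul_assoc, ← mul_assoc, mul_div_mul_right _ _ hp]
    rw [h1u P hP, h1u Q hQ]
    constructor
    · apply adicAbv_eq_of_valuation
      simp only [hu, map_div₀, Valuation.map_neg, map_mul]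
      rw [(detP_valuation v pa).2, (detP_valuation v pc).2, (detP_valuation v qa).2,
        (detP_valuation v qc).2, aux _ _ _ _ _ WithZero.exp_ne_zero,
        aux _ _ _ _ _ WithZero.exp_ne_zero]
    · apply adicAbv_eq_of_valuation
      simp only [map_div₀, Valuation.map_neg, map_mul]
      rw [(detP_valuation v pb).2, (detP_valuation v pc).2, (detP_valuation v qb).2,
        (detP_valuation v qc).2, aux _ _ _ _ _ WithZero.exp_ne_zero,
        aux _ _ _ _ _ WithZero.exp_ne_zero]

end partF

/-- **Three-Point Lemma A.** Given three distinct points `A, B, C ∈ ℙ¹(K)`, the set of points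
`P ∈ ℙ¹(K)` with `δ_𝔭(A,P) = δ_𝔭(B,P) = δ_𝔭(C,P) = 0` for all `𝔭 ∉ S` is finite of
cardinality at most `3·7^{4|S|}`. -/
theorem three_point_lemma_A
    {K : Type*} [Field K] [NumberField K]
    (T : Finset (HeightOneSpectrum (𝓞 K)))
    (A B C : P1 K) (hAB : A ≠ B) (hAC : A ≠ C) (hBC : B ≠ C) :
    {P : P1 K | ∀ v ∉ T,
        logDist v A P = 0 ∧ logDist v B P = 0 ∧ logDist v C P = 0}.Finite ∧
      {P : P1 K | ∀ v ∉ T,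
        logDist v A P = 0 ∧ logDist v B P = 0 ∧ logDist v C P = 0}.ncard ≤
          3 * 7 ^ (4 * sCard K T) := by
  have hfin : {P : P1 K | ∀ v ∉ T,
        logDist v A P = 0 ∧ logDist v B P = 0 ∧ logDist v C P = 0}.Finite := by
    by_contra hinf
    obtain ⟨X, hX, hcard⟩ := Set.Infinite.exists_subset_card_eq hinf (3 * 7 ^ (4 * sCard K T) + 1)
    have := finset_points_bound T A B C hAB hAC hBC X (fun P hP => hX hP)
    omega
  refine ⟨hfin, ?_⟩
  rw [Set.ncard_eq_toFinset_card _ hfin]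
  exact finset_points_bound T A B C hAB hAC hBC _ (fun P hP => by simpa using hP)
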